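/- arXiv:1304.0745 — 3 statements merged into one kernel-verified Lean document; each statement's English description precedes it below -/
import Mathlib

section
/- Let R be a polynomial ring over an algebraically closed field K. Let I be an ideal generated by n ≥ 3 quadrics represented by minors by the 2×(n+1) matrix M = [[x, 0, a_{12}, a_{13}, …, a_{1n}], [y, a_{21}, 0, a_{23}, …, a_{2n}]], where all entries are linear forms or zero, x, y are linearly independent linear forms, and the submatrix D = [[x, a_{13}, …, a_{1n}], [y, a_{23}, …, a_{2n}]] obtained by deleting the second and third columns is 1-generic. Then pd(R/I) ≤ 2n − 2. -/
open MvPolynomial Filter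

universe u

/-- `PdLE R n M` means the `R`-module `M` has projective dimension at most `n`:
either `M` is projective (`n = 0`), or `M` is a quotient of a free module by a
submodule of projective dimension at most `n - 1`. -/
def PdLE (R : Type u) [CommRing R] : ℕ → (M : Type u) → [AddCommGroup M] → [Module R M] → Prop
  | 0, M, _, _ => Module.Projective R M
  | n + 1, M, _, _ => ∃ (F : Type u) (_ : AddCommGroup F) (_ : Module R F),
      Module.Free R F ∧ ∃ f : F →ₗ[R] M, Function.Surjective f ∧ PdLE R n (LinearMap.ker f)

/-- The projective dimension of an `R`-module `M`, as an element of `ℕ∞`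
(`⊤` if `M` has no finite free resolution). -/
noncomputable def projDim (R : Type u) [CommRing R] (M : Type u) [AddCommGroup M]
    [Module R M] : ℕ∞ :=
  sInf ((fun n : ℕ => (n : ℕ∞)) '' {n : ℕ | PdLE R n M})

/-- The height of an ideal: the infimum of the heights of the prime ideals containing it. -/
noncomputable def idealHeight {R : Type*} [CommRing R] (I : Ideal R) : ℕ∞ :=
  ⨅ p ∈ {p : PrimeSpectrum R | I ≤ p.asIdeal}, Order.height p

/-- The length of a module, defined as the Krull dimension of its lattice of submodules. -/
noncomputable def moduleLength (R : Type u) [CommRing R] (M : Type u) [AddCommGroup M]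
    [Module R M] : WithBot ℕ∞ :=
  Order.krullDim (Submodule R M)

/-- `IsHSMultiplicity R mx I e` asserts that the Hilbert–Samuel multiplicity of `R/I`
with respect to the ideal `mx` equals `e`: for `d = dim R/I` there is a polynomial `P`
of degree `d` with `e = d! · (leading coefficient of P)` such that
`length (R/(I + mx^n)) = P(n)` for all large `n`. -/
def IsHSMultiplicity (R : Type u) [CommRing R] (mx I : Ideal R) (e : ℕ) : Prop :=
  ∃ (d : ℕ) (P : Polynomial ℚ),
    ringKrullDim (R ⧸ I) = (d : WithBot ℕ∞) ∧
    P.natDegree = d ∧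
    (e : ℚ) = P.leadingCoeff * d.factorial ∧
    ∀ᶠ n : ℕ in Filter.atTop, ∃ k : ℕ, (k : ℚ) = P.eval (n : ℚ) ∧
      moduleLength R (R ⧸ (I ⊔ mx ^ n)) = ((k : ℕ∞) : WithBot ℕ∞)

/-- A matrix over a `K`-algebra is `1`-generic if it has no generalized zero entry:
for every nonzero vectors `u`, `v` of scalars, `uᵀ M v ≠ 0`. -/
def OneGeneric (K : Type*) [Field K] {R : Type u} [CommRing R] [Algebra K R]
    {m l : ℕ} (M : Matrix (Fin m) (Fin l) R) : Prop :=
  ∀ (u : Fin m → K) (v : Fin l → K), u ≠ 0 → v ≠ 0 →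
    ∑ i, ∑ j, algebraMap K R (u i * v j) * M i j ≠ 0

/-- The ideal of all `2 × 2` minors of a `2 × l` matrix. -/
def minors2 {R : Type u} [CommRing R] {l : ℕ} (M : Matrix (Fin 2) (Fin l) R) : Ideal R :=
  Ideal.span (Set.range fun p : Fin l × Fin l => M 0 p.1 * M 1 p.2 - M 0 p.2 * M 1 p.1)

/-- The homogeneous maximal ideal of a polynomial ring. -/
noncomputable def maxIdeal (K : Type*) [Field K] (σ : Type*) : Ideal (MvPolynomial σ K) :=
  Ideal.span (Set.range (X : σ → MvPolynomial σ K))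

/-- The ideal represented by minors by the `2 × (n+1)` matrix with first column `(x, y)ᵀ`
and remaining columns `(u j, v j)ᵀ`: it is generated by the `2 × 2` minors involving
the first column. -/
def repByMinors {R : Type u} [CommRing R] {n : ℕ} (x y : R) (u v : Fin n → R) : Ideal R :=
  Ideal.span (Set.range fun j : Fin n => x * v j - y * u j)


open CategoryTheory in
/-- projective dimension of a cyclic module. -/
abbrev PDI {R : Type u} [CommRing R] (J : Ideal R) (n : ℕ) : Prop :=
  HasProjectiveDimensionLE (ModuleCat.of R (R ⧸ J)) n

section PD
open CategoryTheory
variable {R : Type u} [CommRing R]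

theorem PDI.mono {J : Ideal R} {a b : ℕ} (h : PDI J a) (hab : a ≤ b) : PDI J b :=
  haveI := h
  hasProjectiveDimensionLT_of_ge _ (a + 1) (b + 1) (by omega)

theorem linSES {R : Type u} [CommRing R] {A B C : Type u} [AddCommGroup A] [AddCommGroup B]
    [AddCommGroup C] [Module R A] [Module R B] [Module R C] (f : A →ₗ[R] B) (g : B →ₗ[R] C)
    (hf : Function.Injective f) (hg : Function.Surjective g) (hfg : Function.Exact f g) :
    ∃ S : ShortComplex (ModuleCat.{u} R), S.ShortExact ∧ S.X₁ = ModuleCat.of R A ∧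
      S.X₂ = ModuleCat.of R B ∧ S.X₃ = ModuleCat.of R C := by
  refine ⟨ShortComplex.mk (ModuleCat.ofHom f) (ModuleCat.ofHom g) ?_, ?_, rfl, rfl, rfl⟩
  · ext x
    exact hfg.apply_apply_eq_zero x
  · exact ShortComplex.ShortExact.mk' 
      ((ShortComplex.ShortExact.moduleCat_exact_iff_function_exact _).2 hfg)
      ((ModuleCat.mono_iff_injective _).2 hf) ((ModuleCat.epi_iff_surjective _).2 hg)

theorem colonSES (J J' J'' : Ideal R) (f : R) (h' : ∀ g, g ∈ J' ↔ f * g ∈ J)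
    (h'' : J'' = J ⊔ Ideal.span {f}) :
    ∃ S : ShortComplex (ModuleCat.{u} R), S.ShortExact ∧ S.X₁ = ModuleCat.of R (R ⧸ J') ∧
      S.X₂ = ModuleCat.of R (R ⧸ J) ∧ S.X₃ = ModuleCat.of R (R ⧸ J'') := by
  have hle : J ≤ J'' := h'' ▸ le_sup_left
  have hc : J' ≤ Submodule.comap (LinearMap.mulLeft R f) J := fun g hg => by
    rw [Submodule.mem_comap]; exact (h' g).1 hg
  refine linSES (Submodule.mapQ J' J (LinearMap.mulLeft R f) hc)
    (Submodule.factor hle) ?_ (Submodule.factor_surjective hle) ?_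
  · rw [injective_iff_map_eq_zero]
    intro a
    obtain ⟨a, rfl⟩ := Submodule.Quotient.mk_surjective _ a
    intro h
    rw [Submodule.mapQ_apply, Submodule.Quotient.mk_eq_zero] at h
    rw [Submodule.Quotient.mk_eq_zero]
    exact (h' a).2 h
  · intro a
    obtain ⟨a, rfl⟩ := Submodule.Quotient.mk_surjective _ a
    constructor
    · intro h
      have h1 : a ∈ J'' := (Submodule.Quotient.mk_eq_zero J'').1 h
      have h0 : a ∈ J ⊔ Ideal.span {f} := h'' ▸ h1
      rw [sup_comm, Ideal.mem_span_singleton_sup] at h0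
      obtain ⟨c, b, hb, rfl⟩ := h0
      refine ⟨Submodule.Quotient.mk c, ?_⟩
      rw [Submodule.mapQ_apply, Submodule.Quotient.eq]
      have : f * c - (c * f + b) = -b := by ring
      rw [LinearMap.mulLeft_apply, this]
      exact J.neg_mem hb
    · rintro ⟨c, hc⟩
      obtain ⟨c, rfl⟩ := Submodule.Quotient.mk_surjective _ c
      rw [Submodule.mapQ_apply, Submodule.Quotient.eq] at hc
      refine (Submodule.Quotient.mk_eq_zero J'').2 ?_
      have h1 := hle hc
      have h2 : f * c ∈ J'' := h'' ▸ Ideal.mul_mem_right _ _ (Ideal.mem_sup_right (Ideal.mem_span_singleton_self f))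
      have h3 := J''.sub_mem h2 h1
      rw [LinearMap.mulLeft_apply, sub_sub_cancel] at h3
      exact h3

theorem pd_mid (J J' J'' : Ideal R) (f : R) (h' : ∀ g, g ∈ J' ↔ f * g ∈ J)
    (h'' : J'' = J ⊔ Ideal.span {f}) {n : ℕ} (h1 : PDI J' n) (h3 : PDI J'' n) : PDI J n := by
  obtain ⟨S, hS, e1, e2, e3⟩ := colonSES J J' J'' f h' h''
  have := hS.hasProjectiveDimensionLT_X₂ (n + 1) (by rw [e1]; exact h1) (by rw [e3]; exact h3)
  rwa [e2] at this

theorem pd_fst (J J' J'' : Ideal R) (f : R) (h' : ∀ g, g ∈ J' ↔ f * g ∈ J)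
    (h'' : J'' = J ⊔ Ideal.span {f}) {n : ℕ} (h2 : PDI J n) (h3 : PDI J'' (n + 1)) : PDI J' n := by
  obtain ⟨S, hS, e1, e2, e3⟩ := colonSES J J' J'' f h' h''
  have := hS.hasProjectiveDimensionLT_X₁ (n + 1) (by rw [e2]; exact h2) (by rw [e3]; exact h3)
  rwa [e1] at this

theorem pd_prime (P : Ideal R) [hP : P.IsPrime] (f : R) {n : ℕ} (h : PDI P n) :
    PDI (P ⊔ Ideal.span {f}) (n + 1) := by
  by_cases hf : f ∈ P
  · have : P ⊔ Ideal.span {f} = P := by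
      simpa [Ideal.span_le] using hf
    rw [this]
    exact h.mono (by omega)
  · obtain ⟨S, hS, e1, e2, e3⟩ := colonSES P P _ f
      (fun g => ⟨fun hg => P.mul_mem_left _ hg, fun hg => (hP.mem_or_mem hg).resolve_left hf⟩) rfl
    have := hS.hasProjectiveDimensionLT_X₃ (n + 1) (by rw [e1]; exact h)
      (by rw [e2]; exact h.mono (by omega))
    rwa [e3] at this

theorem pd_bot : PDI (⊥ : Ideal R) 0 := by
  have : Module.Projective R (R ⧸ (⊥ : Ideal R)) :=
    Module.Projective.of_equiv (Submodule.quotEquivOfEqBot (⊥ : Submodule R R) rfl).symm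
  rw [PDI, ← projective_iff_hasProjectiveDimensionLE_zero, ← IsProjective.iff_projective]
  exact this

theorem PdLE_of_hasPD (n : ℕ) (M : Type u) [AddCommGroup M] [Module R M]
    (h : HasProjectiveDimensionLE (ModuleCat.of R M) n) : PdLE R n M := by
  induction n generalizing M with
  | zero =>
    rw [← projective_iff_hasProjectiveDimensionLE_zero, ← IsProjective.iff_projective] at h
    exact h
  | succ n ih =>
    refine ⟨M →₀ R, inferInstance, inferInstance, inferInstance,
      Finsupp.linearCombination R id, ?_, ?_⟩
    · intro m
      exact ⟨Finsupp.single m 1, by simp⟩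
    · apply ih
      have hS := LinearMap.shortExact_shortComplexKer (f := Finsupp.linearCombination R (id : M → M))
        (fun m => ⟨Finsupp.single m 1, by simp⟩)
      have hp : Projective (ModuleCat.of R (M →₀ R)) :=
        (IsProjective.iff_projective _).1 inferInstance
      exact (hS.hasProjectiveDimensionLT_X₃_iff n hp).1 h

theorem projDim_le_of_hasPD (n : ℕ) (M : Type u) [AddCommGroup M] [Module R M]
    (h : HasProjectiveDimensionLE (ModuleCat.of R M) n) : projDim R M ≤ n :=
  sInf_le ⟨n, PdLE_of_hasPD n M h, rfl⟩

end PD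

section Hilbert
set_option linter.unusedSectionVars false
open CategoryTheory TensorProduct

/-- every module has projective dimension at most n. -/
def GDLE (A : Type u) [CommRing A] (n : ℕ) : Prop :=
  ∀ (M : Type u) [AddCommGroup M] [Module A M], HasProjectiveDimensionLE (ModuleCat.of A M) n

theorem baseChange_ker_exact {A B : Type u} [CommRing A] [CommRing B] [Algebra A B]
    [Module.Flat A B] {F M : Type u} [AddCommGroup F] [Module A F] [AddCommGroup M] [Module A M]
    (f : F →ₗ[A] M) (hf : Function.Surjective f) :
    Function.Injective ((LinearMap.ker f).subtype.baseChange B) ∧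
    Function.Exact ((LinearMap.ker f).subtype.baseChange B) (f.baseChange B) ∧
    Function.Surjective (f.baseChange B) := by
  refine ⟨?_, ?_, ?_⟩
  · exact Module.Flat.lTensor_preserves_injective_linearMap (M := B) (LinearMap.ker f).subtype
        (Submodule.injective_subtype _)
  · exact lTensor_exact B (LinearMap.exact_subtype_ker_map f) hf
  · exact LinearMap.lTensor_surjective B hf

theorem pd_baseChange {A B : Type u} [CommRing A] [CommRing B] [Algebra A B] [Module.Flat A B]
    (n : ℕ) (M : Type u) [AddCommGroup M] [Module A M]
    (h : HasProjectiveDimensionLE (ModuleCat.of A M) n) :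
    HasProjectiveDimensionLE (ModuleCat.of B (B ⊗[A] M)) n := by
  induction n generalizing M with
  | zero =>
    rw [← projective_iff_hasProjectiveDimensionLE_zero, ← IsProjective.iff_projective] at h ⊢
    have : Module.Projective A M := h
    exact (inferInstance : Module.Projective B (B ⊗[A] M))
  | succ n ih =>
    let f := Finsupp.linearCombination A (id : M → M)
    have hf : Function.Surjective f := fun m => ⟨Finsupp.single m 1, by simp [f]⟩
    have hS := LinearMap.shortExact_shortComplexKer hf
    have hp : Projective (ModuleCat.of A (M →₀ A)) :=
      (IsProjective.iff_projective _).1 inferInstance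
    have h1 := ih _ ((hS.hasProjectiveDimensionLT_X₃_iff n hp).1 h)
    obtain ⟨hfl, hex, hsu⟩ := baseChange_ker_exact (B := B) f hf
    obtain ⟨S, hS', e1, e2, e3⟩ := linSES _ _ hfl hsu hex
    have hp' : Projective (ModuleCat.of B (B ⊗[A] (M →₀ A))) :=
      (IsProjective.iff_projective _).1 inferInstance
    have := hS'.hasProjectiveDimensionLT_X₃_iff n (by rw [e2]; exact hp')
    rw [e1, e3] at this
    exact this.2 h1

theorem GDLE.of_ringEquiv {A B : Type u} [CommRing A] [CommRing B] (e : A ≃+* B) {n : ℕ}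
    (h : GDLE A n) : GDLE B n := by
  intro M _ _
  let : Module A M := Module.compHom M e.toRingHom
  have := h M
  let := RingHomInvPair.of_ringEquiv e
  let := RingHomInvPair.symm (RingHomClass.toRingHom e) (RingHomClass.toRingHom e.symm)
  refine ModuleCat.hasProjectiveDimensionLE_of_semiLinearEquiv e (M := ModuleCat.of A M)
    (N := ModuleCat.of B M) ?_ n
  exact { AddEquiv.refl M with map_smul' := fun a m => rfl }

theorem GDLE_field (K : Type u) [Field K] : GDLE K 0 := by
  intro M _ _
  rw [← projective_iff_hasProjectiveDimensionLE_zero, ← IsProjective.iff_projective]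
  exact (inferInstance : Module.Projective K M)

variable {A : Type u} [CommRing A] {M : Type u} [AddCommGroup M] [Module A M]
  [Module (Polynomial A) M] [IsScalarTower A (Polynomial A) M]

open Polynomial in
/-- coefficient map -/
noncomputable def kap (n : ℕ) : (A[X] ⊗[A] M) →ₗ[A] M :=
  TensorProduct.lift ((LinearMap.lsmul A M).comp (Polynomial.lcoeff A n))

open Polynomial in
theorem kap_tmul (n : ℕ) (b : A[X]) (m : M) : kap n (b ⊗ₜ[A] m) = b.coeff n • m := by
  simp [kap]

open Polynomial in
theorem kap_expand (t : A[X] ⊗[A] M) :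
    ∃ N, ∀ N' ≥ N, kap N' t = 0 ∧
      t = ∑ n ∈ Finset.range N', (Polynomial.X ^ n : A[X]) ⊗ₜ[A] kap n t := by
  induction t using TensorProduct.induction_on with
  | zero => exact ⟨0, fun N' _ => by simp⟩
  | tmul b m =>
    refine ⟨b.natDegree + 1, fun N' hN => ⟨?_, ?_⟩⟩
    · rw [kap_tmul, Polynomial.coeff_eq_zero_of_natDegree_lt (by omega), zero_smul]
    · simp_rw [kap_tmul, ← TensorProduct.smul_tmul, ← TensorProduct.sum_tmul]
      congr 1
      conv_lhs => rw [Polynomial.as_sum_range' b N' (by omega)]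
      refine Finset.sum_congr rfl fun i _ => ?_
      rw [Polynomial.smul_X_eq_monomial]
  | add s t hs ht =>
    obtain ⟨N1, h1⟩ := hs
    obtain ⟨N2, h2⟩ := ht
    refine ⟨max N1 N2, fun N' hN => ⟨?_, ?_⟩⟩
    · rw [map_add, (h1 N' (le_trans (le_max_left _ _) hN)).1,
        (h2 N' (le_trans (le_max_right _ _) hN)).1, add_zero]
    · simp_rw [map_add, TensorProduct.tmul_add, Finset.sum_add_distrib]
      rw [← (h1 N' (le_trans (le_max_left _ _) hN)).2,
        ← (h2 N' (le_trans (le_max_right _ _) hN)).2]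

open Polynomial in
/-- multiplication by X on M, A-linear -/
noncomputable def mX : M →ₗ[A] M := (LinearMap.lsmul A[X] M Polynomial.X).restrictScalars A

open Polynomial in
theorem mX_apply (m : M) : mX (A := A) m = (Polynomial.X : A[X]) • m := rfl

open Polynomial in
/-- the differential -/
noncomputable def dX : (A[X] ⊗[A] M) →ₗ[A[X]] (A[X] ⊗[A] M) :=
  LinearMap.lsmul A[X] _ Polynomial.X - LinearMap.baseChange A[X] (mX (A := A) (M := M))

open Polynomial in
theorem dX_tmul (b : A[X]) (m : M) :
    dX (b ⊗ₜ[A] m) = (Polynomial.X * b) ⊗ₜ[A] m - b ⊗ₜ[A] ((Polynomial.X : A[X]) • m) := by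
  simp [dX, mX_apply, TensorProduct.smul_tmul']

open Polynomial in
/-- the augmentation -/
noncomputable def aX : (A[X] ⊗[A] M) →ₗ[A[X]] M :=
  TensorProduct.AlgebraTensorModule.lift
    ((LinearMap.toSpanSingleton A[X] (M →ₗ[A] M) LinearMap.id : A[X] →ₗ[A[X]] (M →ₗ[A] M)))

open Polynomial in
theorem aX_tmul (b : A[X]) (m : M) : aX (b ⊗ₜ[A] m) = b • m := by
  simp [aX]

open Polynomial in
theorem kap_dX_succ (n : ℕ) (t : A[X] ⊗[A] M) :
    kap (n + 1) (dX t) = kap n t - (Polynomial.X : A[X]) • kap (n + 1) t := by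
  induction t using TensorProduct.induction_on with
  | zero => simp
  | tmul b m =>
    rw [dX_tmul, map_sub, kap_tmul, kap_tmul, kap_tmul, kap_tmul, Polynomial.coeff_X_mul,
      smul_comm]
  | add s t hs ht =>
    simp only [map_add, hs, ht, smul_add]; abel

open Polynomial in
theorem GDLE.polynomial (A : Type u) [CommRing A] {n : ℕ} (h : GDLE A n) : GDLE A[X] (n + 1) := by
  intro M _ _
  let : Module A M := Module.compHom M (Polynomial.C : A →+* A[X])
  have : IsScalarTower A A[X] M := ⟨fun a b m => by
    change (a • b) • m = (Polynomial.C a) • (b • m)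
    rw [Polynomial.smul_eq_C_mul, mul_smul]⟩
  have hpd := pd_baseChange (B := A[X]) n M (h M)
  have hinj : Function.Injective (dX (A := A) (M := M)) := by
    rw [injective_iff_map_eq_zero]
    intro t ht
    obtain ⟨N, hN⟩ := kap_expand t
    have hz : ∀ k, k ≤ N → kap (N - k) t = 0 := by
      intro k
      induction k with
      | zero => intro _; exact (hN N le_rfl).1
      | succ k ih =>
        intro hk
        have h1 := kap_dX_succ (N - (k + 1)) t
        rw [ht, map_zero, show N - (k + 1) + 1 = N - k by omega, ih (by omega), smul_zero,
          sub_zero] at h1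
        exact h1.symm
    rw [(hN N le_rfl).2]
    refine Finset.sum_eq_zero fun i hi => ?_
    have := hz (N - i) (by omega)
    rw [show N - (N - i) = i by have := Finset.mem_range.1 hi; omega] at this
    rw [this, TensorProduct.tmul_zero]
  have hcomp : ∀ t, aX (A := A) (M := M) (dX t) = 0 := by
    intro t
    induction t using TensorProduct.induction_on with
    | zero => simp
    | tmul b m =>
      rw [dX_tmul, map_sub, aX_tmul, aX_tmul, ← mul_smul, mul_comm, sub_self]
    | add s t hs ht => rw [map_add, map_add, hs, ht, add_zero]
  have hsub : ∀ (b : A[X]) (m : M), b ⊗ₜ[A] m - 1 ⊗ₜ[A] (b • m) ∈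
      LinearMap.range (dX (A := A) (M := M)) := by
    intro b
    induction b using Polynomial.induction_on with
    | C a =>
      intro m
      have : (Polynomial.C a : A[X]) ⊗ₜ[A] m = (1 : A[X]) ⊗ₜ[A] ((Polynomial.C a : A[X]) • m) := by
        have h1 : (Polynomial.C a : A[X]) = a • (1 : A[X]) := by
          rw [Polynomial.smul_eq_C_mul, mul_one]
        have h2 : (Polynomial.C a : A[X]) • m = a • m := rfl
        rw [h2, h1, TensorProduct.smul_tmul]
      rw [this, sub_self]
      exact Submodule.zero_mem _
    | add p q hp hq =>
      intro m
      have := Submodule.add_mem _ (hp m) (hq m)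
      rw [TensorProduct.add_tmul, add_smul, TensorProduct.tmul_add]
      convert this using 1
      abel
    | monomial k a ih =>
      intro m
      have h1 := ih ((Polynomial.X : A[X]) • m)
      have h2 : dX ((Polynomial.C a * Polynomial.X ^ k : A[X]) ⊗ₜ[A] m) ∈
        LinearMap.range (dX (A := A) (M := M)) := ⟨_, rfl⟩
      have := Submodule.add_mem _ h2 h1
      rw [dX_tmul, ← mul_smul] at this
      convert this using 1
      rw [show (Polynomial.X * (Polynomial.C a * Polynomial.X ^ k) : A[X]) =
        Polynomial.C a * Polynomial.X ^ (k + 1) by ring,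
        show (Polynomial.C a * Polynomial.X ^ k * Polynomial.X : A[X]) =
        Polynomial.C a * Polynomial.X ^ (k + 1) by ring]
      abel
  have hsub' : ∀ t, t - 1 ⊗ₜ[A] (aX t) ∈ LinearMap.range (dX (A := A) (M := M)) := by
    intro t
    induction t using TensorProduct.induction_on with
    | zero => simp
    | tmul b m => rw [aX_tmul]; exact hsub b m
    | add s t hs ht =>
      have := Submodule.add_mem _ hs ht
      rw [map_add, TensorProduct.tmul_add]
      convert this using 1
      abel
  have hex : Function.Exact (dX (A := A) (M := M)) (aX (A := A) (M := M)) := by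
    intro t
    constructor
    · intro ht
      have := hsub' t
      rw [ht, TensorProduct.tmul_zero, sub_zero] at this
      exact this
    · rintro ⟨s, rfl⟩
      exact hcomp s
  obtain ⟨S, hS, e1, e2, e3⟩ := linSES _ _ hinj
    (fun m => ⟨1 ⊗ₜ[A] m, by rw [aX_tmul, one_smul]⟩) hex
  have := hS.hasProjectiveDimensionLT_X₃ (n + 1) (by rw [e1]; exact hpd)
    (by rw [e2]; exact @hasProjectiveDimensionLT_of_ge _ _ _ _ (n + 1) (n + 1 + 1) (by omega) hpd)
  rwa [e3] at this

theorem GDLE_mvPolynomial (K : Type u) [Field K] (d : ℕ) : GDLE (MvPolynomial (Fin d) K) d := by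
  induction d with
  | zero => exact (GDLE_field K).of_ringEquiv (MvPolynomial.isEmptyRingEquiv K (Fin 0)).symm
  | succ d ih =>
    exact (GDLE.polynomial _ ih).of_ringEquiv (MvPolynomial.finSuccEquiv K d).symm.toRingEquiv

/-- relative Hilbert. -/
theorem pd_map_flat {A B : Type u} [CommRing A] [CommRing B] (φ : A →+* B) (hφ : φ.Flat) {n : ℕ}
    (hA : GDLE A n) (J : Ideal A) : PDI (J.map φ) n := by
  let := φ.toAlgebra
  have : Module.Flat A B := hφ
  have h := pd_baseChange (B := B) n (A ⧸ J) (hA _)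
  have := h
  exact ModuleCat.hasProjectiveDimensionLE_of_linearEquiv (M := ModuleCat.of B (B ⊗[A] (A ⧸ J)))
    (N := ModuleCat.of B (B ⧸ J.map φ)) (Ideal.qoutMapEquivTensorQout B (I := J)).symm n

end Hilbert

section Lin
variable {F : Type u} [Field F] {N : ℕ}

/-- the linear form with given coefficients. -/
noncomputable def lin : (Fin N → F) →ₗ[F] MvPolynomial (Fin N) F :=
  Fintype.linearCombination F (X : Fin N → MvPolynomial (Fin N) F)

theorem lin_apply (v : Fin N → F) : lin v = ∑ i, C (v i) * X i := by
  simp [lin, Fintype.linearCombination_apply, MvPolynomial.smul_eq_C_mul]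

theorem lin_single (i : Fin N) : lin (Pi.single i (1 : F)) = X i := by
  simp [lin]

theorem coeff_lin (v : Fin N → F) (i : Fin N) : (lin v).coeff (Finsupp.single i 1) = v i := by
  classical
  rw [lin_apply, MvPolynomial.coeff_sum]
  simp [MvPolynomial.coeff_C_mul, MvPolynomial.coeff_X, Finsupp.single_left_inj]

theorem lin_injective : Function.Injective (lin : (Fin N → F) →ₗ[F] _) := by
  intro v w h
  funext i
  rw [← coeff_lin v, h, coeff_lin]

theorem exists_lin {p : MvPolynomial (Fin N) F} (hp : p.IsHomogeneous 1) : ∃ v, lin v = p := by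
  have : p ∈ homogeneousSubmodule (Fin N) F 1 := hp
  rw [MvPolynomial.homogeneousSubmodule_one_eq_span_X,
    Submodule.mem_span_range_iff_exists_fun] at this
  obtain ⟨c, hc⟩ := this
  exact ⟨c, by rw [← hc]; simp [lin, Fintype.linearCombination_apply]⟩

/-- linear substitution -/
noncomputable def lsub (π : (Fin N → F) →ₗ[F] (Fin N → F)) :
    MvPolynomial (Fin N) F →ₐ[F] MvPolynomial (Fin N) F :=
  aeval (fun i => lin (π (Pi.single i 1)))

theorem lsub_lin (π : (Fin N → F) →ₗ[F] (Fin N → F)) (v) : lsub π (lin v) = lin (π v) := by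
  have : ((lsub π).toLinearMap.comp lin) = lin.comp π := by
    apply LinearMap.pi_ext'
    intro i
    ext1
    simp only [LinearMap.comp_apply, LinearMap.coe_single, AlgHom.toLinearMap_apply, lin_single]
    simp [lsub]
  exact LinearMap.congr_fun this v

theorem sub_lsub_mem (π : (Fin N → F) →ₗ[F] (Fin N → F)) (J : Ideal (MvPolynomial (Fin N) F))
    (h : ∀ v, lin (v - π v) ∈ J) (f : MvPolynomial (Fin N) F) : f - lsub π f ∈ J := by
  have : (Ideal.Quotient.mkₐ F J).comp (lsub π) = Ideal.Quotient.mkₐ F J := by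
    apply MvPolynomial.algHom_ext
    intro i
    have := h (Pi.single i 1)
    rw [map_sub, lin_single, ← lsub_lin, lin_single] at this
    exact ((Ideal.Quotient.eq).2 this).symm
  have h2 := AlgHom.congr_fun this f
  exact (Ideal.Quotient.eq).1 h2.symm

theorem exists_proj (W : Submodule F (Fin N → F)) :
    ∃ π : (Fin N → F) →ₗ[F] (Fin N → F), (∀ v, v - π v ∈ W) ∧ ∀ v, π v = 0 ↔ v ∈ W := by
  obtain ⟨W', hW⟩ := W.exists_isCompl
  refine ⟨W'.subtype.comp (Submodule.projectionOnto W' W hW.symm), fun v => ?_, fun v => ?_⟩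
  · rw [← Submodule.projectionOnto_apply_eq_zero_iff hW.symm, map_sub,
      LinearMap.comp_apply, Submodule.subtype_apply, Submodule.projectionOnto_apply_left, sub_self]
  · simp

/-- ideal of linear forms -/
noncomputable def LI {ι : Type*} (r : ι → Fin N → F) : Ideal (MvPolynomial (Fin N) F) :=
  Ideal.span (Set.range fun j => lin (r j))

theorem lin_mem_LI {ι : Type*} (r : ι → Fin N → F) {v} (h : v ∈ Submodule.span F (Set.range r)) :
    lin v ∈ LI r := by
  have : Submodule.span F (Set.range r) ≤ ((LI r).restrictScalars F).comap lin := by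
    rw [Submodule.span_le]
    rintro _ ⟨j, rfl⟩
    exact Ideal.subset_span ⟨j, rfl⟩
  exact this h

theorem LI_eq {ι : Type*} (r : ι → Fin N → F) (π : (Fin N → F) →ₗ[F] (Fin N → F))
    (h1 : ∀ v, v - π v ∈ Submodule.span F (Set.range r))
    (h2 : ∀ v, π v = 0 ↔ v ∈ Submodule.span F (Set.range r)) :
    LI r = RingHom.ker (lsub π) := by
  apply le_antisymm
  · rw [LI, Ideal.span_le]
    rintro _ ⟨j, rfl⟩
    rw [SetLike.mem_coe, RingHom.mem_ker, lsub_lin,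
      (h2 _).2 (Submodule.subset_span ⟨j, rfl⟩), map_zero]
  · intro f hf
    have := sub_lsub_mem π (LI r) (fun v => lin_mem_LI r (h1 v)) f
    rw [RingHom.mem_ker] at hf
    rwa [hf, sub_zero] at this

instance LI_prime {ι : Type*} (r : ι → Fin N → F) : (LI r).IsPrime := by
  obtain ⟨π, h1, h2⟩ := exists_proj (Submodule.span F (Set.range r))
  rw [LI_eq r π h1 h2]
  exact RingHom.ker_isPrime _

theorem lin_mem_LI_iff {ι : Type*} (r : ι → Fin N → F) {v} :
    lin v ∈ LI r ↔ v ∈ Submodule.span F (Set.range r) := by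
  refine ⟨fun h => ?_, lin_mem_LI r⟩
  obtain ⟨π, h1, h2⟩ := exists_proj (Submodule.span F (Set.range r))
  rw [LI_eq r π h1 h2, RingHom.mem_ker, lsub_lin] at h
  exact (h2 v).1 (lin_injective (by rw [h, map_zero]))

theorem LI_succ {k : ℕ} (r : Fin (k + 1) → Fin N → F) :
    LI r = LI (fun j : Fin k => r j.succ) ⊔ Ideal.span {lin (r 0)} := by
  rw [LI, LI, ← Ideal.span_union]
  congr 1
  ext f
  simp only [Set.mem_range, Set.union_singleton, Set.mem_insert_iff, Fin.exists_fin_succ]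
  tauto

theorem LI_pd {k : ℕ} (r : Fin k → Fin N → F) : PDI (LI r) k := by
  induction k with
  | zero =>
    have : LI r = ⊥ := by simp [LI]
    rw [this]; exact pd_bot
  | succ k ih => rw [LI_succ]; exact pd_prime _ _ (ih _)

theorem koszul {k : ℕ} (r : Fin k → Fin N → F) (hr : LinearIndependent F r)
    (g : Fin k → MvPolynomial (Fin N) F) (hg : ∑ j, g j * lin (r j) = 0) :
    ∃ B : Fin k → Fin k → MvPolynomial (Fin N) F,
      ∀ i, g i = ∑ j, (B i j - B j i) * lin (r j) := by
  induction k with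
  | zero => exact ⟨fun _ _ => 0, fun i => i.elim0⟩
  | succ k ih =>
    have hr' := linearIndependent_finSucc.1 hr
    rw [Fin.sum_univ_succ] at hg
    have hmem : g 0 * lin (r 0) ∈ LI (fun j : Fin k => r j.succ) := by
      rw [eq_neg_of_add_eq_zero_left hg]
      refine (LI _).neg_mem (Ideal.sum_mem _ fun j _ => Ideal.mul_mem_left _ _ ?_)
      exact Ideal.subset_span ⟨j, rfl⟩
    have h0 : g 0 ∈ LI (fun j : Fin k => r j.succ) := by
      refine ((LI_prime _).mem_or_mem hmem).resolve_right fun h => hr'.2 ?_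
      exact (lin_mem_LI_iff _).1 h
    obtain ⟨a, ha⟩ := Ideal.mem_span_range_iff_exists_fun.1 h0
    obtain ⟨B, hB⟩ := ih (fun j => r j.succ) hr'.1 (fun j => g j.succ + a j * lin (r 0)) (by
      rw [← hg, ← ha, Finset.sum_mul, ← Finset.sum_add_distrib]
      exact Finset.sum_congr rfl fun j _ => by ring)
    refine ⟨Fin.cons (Fin.cons 0 a) (fun i => Fin.cons 0 (B i)), fun i => ?_⟩
    refine Fin.cases ?_ (fun i => ?_) i
    · rw [Fin.sum_univ_succ]
      simp [← ha]
    · rw [Fin.sum_univ_succ]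
      simp only [Fin.cons_succ, Fin.cons_zero]
      rw [← hB i]; ring

end Lin

section I2
variable {F : Type u} [Field F] {N : ℕ}

/-- ideal of all two by two minors -/
noncomputable def I2 {k : ℕ} (r1 r2 : Fin k → Fin N → F) : Ideal (MvPolynomial (Fin N) F) :=
  Ideal.span (Set.range fun p : Fin k × Fin k =>
    lin (r1 p.1) * lin (r2 p.2) - lin (r1 p.2) * lin (r2 p.1))

theorem mem_I2 {k : ℕ} (r1 r2 : Fin k → Fin N → F) (i j : Fin k) :
    lin (r1 i) * lin (r2 j) - lin (r1 j) * lin (r2 i) ∈ I2 r1 r2 :=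
  Ideal.subset_span ⟨(i, j), rfl⟩

theorem alt_sum {R : Type*} [CommRing R] {k : ℕ} (a b : Fin k → R) (B : Fin k → Fin k → R) :
    ∑ i, (∑ j, (B i j - B j i) * a j) * b i = ∑ i, ∑ j, B i j * (a j * b i - a i * b j) := by
  simp only [Finset.sum_mul, sub_mul, mul_sub, Finset.sum_sub_distrib]
  congr 1
  · exact Finset.sum_congr rfl fun i _ => Finset.sum_congr rfl fun j _ => by ring
  · rw [Finset.sum_comm]
    exact Finset.sum_congr rfl fun i _ => Finset.sum_congr rfl fun j _ => by ring

theorem alt_self {R : Type*} [CommRing R] {k : ℕ} (a : Fin k → R) (B : Fin k → Fin k → R) :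
    ∑ i, (∑ j, (B i j - B j i) * a j) * a i = 0 := by
  rw [alt_sum]
  exact Finset.sum_eq_zero fun i _ => Finset.sum_eq_zero fun j _ => by ring

theorem alt_mem {k : ℕ} (r1 r2 : Fin k → Fin N → F) (B : Fin k → Fin k → MvPolynomial (Fin N) F) :
    ∑ i, (∑ j, (B i j - B j i) * lin (r1 j)) * lin (r2 i) ∈ I2 r1 r2 := by
  rw [alt_sum]
  exact Ideal.sum_mem _ fun i _ => Ideal.sum_mem _ fun j _ => Ideal.mul_mem_left _ _ (mem_I2 _ _ _ _)

theorem alt_swap {R : Type*} [CommRing R] {k : ℕ} (a b : Fin k → R) (B : Fin k → Fin k → R) :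
    ∑ i, (∑ j, (B i j - B j i) * a j) * b i = - ∑ i, (∑ j, (B i j - B j i) * b j) * a i := by
  rw [alt_sum, alt_sum, ← Finset.sum_neg_distrib]
  refine Finset.sum_congr rfl fun i _ => ?_
  rw [← Finset.sum_neg_distrib]
  exact Finset.sum_congr rfl fun j _ => by ring

theorem seq_mem {k : ℕ} (r1 r2 : Fin k → Fin N → F) (hr : LinearIndependent F r1) (e : ℕ)
    (g : ℕ → Fin k → MvPolynomial (Fin N) F) (h0 : ∀ n, e < n → ∀ j, g n j = 0)
    (h : ∀ n, ∑ j, g (n + 1) j * lin (r2 j) = ∑ j, g n j * lin (r1 j)) :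
    ∑ j, g 0 j * lin (r2 j) ∈ I2 r1 r2 := by
  induction e generalizing g with
  | zero =>
    have h1 : ∑ j, g 0 j * lin (r1 j) = 0 := by
      rw [← h 0]; exact Finset.sum_eq_zero fun j _ => by rw [h0 _ (by omega), zero_mul]
    obtain ⟨B, hB⟩ := koszul r1 hr _ h1
    simp only [hB]
    exact alt_mem r1 r2 B
  | succ e ih =>
    have h1 : ∑ j, g (e + 1) j * lin (r1 j) = 0 := by
      rw [← h (e + 1)]; exact Finset.sum_eq_zero fun j _ => by rw [h0 _ (by omega), zero_mul]
    obtain ⟨B, hB⟩ := koszul r1 hr _ h1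
    let g' : ℕ → Fin k → MvPolynomial (Fin N) F := fun n =>
      if n = e then fun i => g e i + ∑ j, (B i j - B j i) * lin (r2 j)
      else if n = e + 1 then 0 else g n
    have hs : ∀ n, n ≠ e + 1 → ∑ j, g' n j * lin (r2 j) = ∑ j, g n j * lin (r2 j) := by
      intro n hn
      by_cases hne : n = e
      · subst hne
        simp only [g', if_true, add_mul, Finset.sum_add_distrib, alt_self, add_zero]
      · simp only [g', hne, hn, if_false]
    rw [← hs 0 (by omega)]
    apply ih g'
    · intro n hn j
      by_cases h2 : n = e + 1
      · simp [g', h2]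
      · simp only [g', show n ≠ e by omega, h2, if_false]
        exact h0 _ (by omega) j
    · intro n
      by_cases hne : n = e
      · subst hne
        have e1 : ∑ j, g' (n + 1) j * lin (r2 j) = 0 := by simp [g']
        rw [e1]
        simp only [g', if_true, add_mul, Finset.sum_add_distrib]
        rw [← h n, alt_swap]
        simp only [hB]
        ring
      · rw [hs (n + 1) (by omega)]
        by_cases h2 : n = e + 1
        · subst h2
          rw [h, h1]
          simp [g']
        · simp only [g', hne, h2, if_false]
          exact h n

/-- the linear ideal over the polynomial ring in one more variable -/
noncomputable def QI {k : ℕ} (r1 r2 : Fin k → Fin N → F) :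
    Ideal (Polynomial (MvPolynomial (Fin N) F)) :=
  Ideal.span (Set.range fun j =>
    Polynomial.C (lin (r2 j)) - Polynomial.X * Polynomial.C (lin (r1 j)))

theorem gen_QI {k : ℕ} (r1 r2 : Fin k → Fin N → F) (j) :
    Polynomial.C (lin (r2 j)) - Polynomial.X * Polynomial.C (lin (r1 j)) ∈ QI r1 r2 :=
  Ideal.subset_span ⟨j, rfl⟩

theorem QI_C {k : ℕ} (r1 r2 : Fin k → Fin N → F) (hr : LinearIndependent F r1)
    (f : MvPolynomial (Fin N) F) (h : Polynomial.C f ∈ QI r1 r2) : f ∈ I2 r1 r2 := by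
  obtain ⟨G, hG⟩ := Ideal.mem_span_range_iff_exists_fun.1 h
  have hc : ∀ n, (Polynomial.C f).coeff n = ∑ j, ((G j).coeff n * lin (r2 j)) -
      ∑ j, (G j * Polynomial.X).coeff n * lin (r1 j) := by
    intro n
    rw [← hG, Polynomial.finsetSum_coeff, ← Finset.sum_sub_distrib]
    refine Finset.sum_congr rfl fun j _ => ?_
    rw [mul_sub, ← mul_assoc, Polynomial.coeff_sub, Polynomial.coeff_mul_C, Polynomial.coeff_mul_C]
  have := seq_mem r1 r2 hr (Finset.univ.sup fun j => (G j).natDegree) (fun n j => (G j).coeff n)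
    (fun n hn j => Polynomial.coeff_eq_zero_of_natDegree_lt
      (lt_of_le_of_lt (Finset.le_sup (f := fun j => (G j).natDegree) (Finset.mem_univ j)) hn))
    (fun n => by
      have := hc (n + 1)
      rw [Polynomial.coeff_C_succ] at this
      simp only [Polynomial.coeff_mul_X] at this
      exact sub_eq_zero.1 this.symm)
  have h0 := hc 0
  simp only [Polynomial.coeff_C_zero, Polynomial.coeff_mul_X_zero, zero_mul,
    Finset.sum_const_zero, sub_zero] at h0
  rw [h0]
  exact this

theorem C_I2_le {k : ℕ} (r1 r2 : Fin k → Fin N → F) (f) (hf : f ∈ I2 r1 r2) :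
    Polynomial.C f ∈ QI r1 r2 := by
  have : I2 r1 r2 ≤ (QI r1 r2).comap Polynomial.C := by
    rw [I2, Ideal.span_le]
    rintro _ ⟨⟨i, j⟩, rfl⟩
    rw [SetLike.mem_coe, Ideal.mem_comap]
    have e : Polynomial.C (lin (r1 i) * lin (r2 j) - lin (r1 j) * lin (r2 i)) =
      Polynomial.C (lin (r1 i)) *
        (Polynomial.C (lin (r2 j)) - Polynomial.X * Polynomial.C (lin (r1 j))) -
      Polynomial.C (lin (r1 j)) *
        (Polynomial.C (lin (r2 i)) - Polynomial.X * Polynomial.C (lin (r1 i))) := by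
      simp only [map_sub, map_mul]; ring
    simp only
    rw [e]
    exact sub_mem (Ideal.mul_mem_left _ _ (gen_QI _ _ _)) (Ideal.mul_mem_left _ _ (gen_QI _ _ _))
  exact this hf

theorem QI_cancel {k : ℕ} (r1 r2 : Fin k → Fin N → F) (l : F)
    (hr : LinearIndependent F (fun j => r2 j - l • r1 j))
    (f : Polynomial (MvPolynomial (Fin N) F))
    (h : (Polynomial.X - Polynomial.C (C l)) * f ∈ QI r1 r2) : f ∈ QI r1 r2 := by
  obtain ⟨G, hG⟩ := Ideal.mem_span_range_iff_exists_fun.1 h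
  have hlin : ∀ j, lin (r2 j - l • r1 j) = lin (r2 j) - C l * lin (r1 j) := fun j => by
    rw [map_sub, map_smul, MvPolynomial.smul_eq_C_mul]
  have hev := congrArg (Polynomial.eval (C l)) hG
  rw [Polynomial.eval_finsetSum, Polynomial.eval_mul] at hev
  simp only [Polynomial.eval_mul, Polynomial.eval_sub, Polynomial.eval_X, Polynomial.eval_C,
    sub_self, zero_mul] at hev
  simp only [← hlin] at hev
  obtain ⟨B, hB⟩ := koszul _ hr _ hev
  have hd : ∀ j, ∃ H, G j = Polynomial.C ((G j).eval (C l)) +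
      (Polynomial.X - Polynomial.C (C l)) * H := by
    intro j
    obtain ⟨H, hH⟩ := Polynomial.X_sub_C_dvd_sub_C_eval (p := G j) (a := C l)
    exact ⟨H, by rw [← hH]; ring⟩
  choose H hH using hd
  have hm : ∑ j, (G j).eval (C l) * lin (r1 j) ∈ I2 r1 r2 := by
    simp only [hB]
    have h1 := alt_mem (fun j => r2 j - l • r1 j) r1 B
    refine (show I2 (fun j => r2 j - l • r1 j) r1 ≤ I2 r1 r2 from ?_) h1
    rw [I2, Ideal.span_le]
    rintro _ ⟨⟨i, j⟩, rfl⟩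
    have := mem_I2 r1 r2 j i
    rw [SetLike.mem_coe]
    simp only [hlin]
    convert this using 1
    ring
  have key : (Polynomial.X - Polynomial.C (C l)) * f = (Polynomial.X - Polynomial.C (C l)) *
     (∑ j, H j * (Polynomial.C (lin (r2 j)) - Polynomial.X * Polynomial.C (lin (r1 j)))
       - Polynomial.C (∑ j, (G j).eval (C l) * lin (r1 j))) := by
    have hev' := congrArg Polynomial.C hev
    rw [map_sum, map_zero] at hev'
    rw [← hG, map_sum, mul_sub, Finset.mul_sum, Finset.mul_sum, ← sub_eq_zero, ← hev',
      ← Finset.sum_sub_distrib, ← Finset.sum_sub_distrib]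
    refine Finset.sum_congr rfl fun j _ => ?_
    rw [hlin]
    have hj := hH j
    simp only [map_sub, map_mul]
    generalize Polynomial.C (Polynomial.eval (C l) (G j)) = t at hj ⊢
    rw [hj]
    ring
  rw [mul_left_cancel₀ (Polynomial.X_sub_C_ne_zero _) key]
  exact sub_mem (Ideal.sum_mem _ fun j _ => Ideal.mul_mem_left _ _ (gen_QI _ _ _))
    (C_I2_le _ _ _ hm)

theorem QI_cancel_poly [IsAlgClosed F] {k : ℕ} (r1 r2 : Fin k → Fin N → F)
    (hr : ∀ l : F, LinearIndependent F (fun j => r2 j - l • r1 j))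
    (p : Polynomial F) (hp : p ≠ 0) (f : Polynomial (MvPolynomial (Fin N) F))
    (h : p.map C * f ∈ QI r1 r2) : f ∈ QI r1 r2 := by
  rw [(IsAlgClosed.splits p).eq_prod_roots, Polynomial.map_mul, Polynomial.map_C, mul_assoc] at h
  have h2 : ((p.roots.map fun a => Polynomial.X - Polynomial.C a).prod).map C * f ∈ QI r1 r2 := by
    have := Ideal.mul_mem_left _ (Polynomial.C (C p.leadingCoeff⁻¹)) h
    rwa [← mul_assoc, ← map_mul, ← map_mul,
      inv_mul_cancel₀ (Polynomial.leadingCoeff_ne_zero.2 hp), map_one, map_one, one_mul] at this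
  generalize p.roots = s at h2
  clear h
  induction s using Multiset.induction with
  | empty => simpa using h2
  | cons a s ih =>
    apply ih
    apply QI_cancel r1 r2 a (hr a)
    rw [Multiset.map_cons, Multiset.prod_cons, Polynomial.map_mul, mul_assoc] at h2
    simpa using h2
end I2

section I2prime
variable {F : Type u} [Field F] {N : ℕ}

/-- swapping the two polynomial constructions -/
noncomputable def pEq (F : Type u) [Field F] (N : ℕ) :
    Polynomial (MvPolynomial (Fin N) F) ≃ₐ[F] MvPolynomial (Fin N) (Polynomial F) :=
  (optionEquivLeft F (Fin N)).symm.trans (optionEquivRight F (Fin N))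

theorem pEq_CC (a : F) : pEq F N (Polynomial.C (C a)) = C (Polynomial.C a) := by
  simp [pEq]

theorem pEq_CX (i : Fin N) : pEq F N (Polynomial.C (X i)) = X i := by
  simp [pEq]

theorem pEq_X : pEq F N Polynomial.X = C Polynomial.X := by
  simp [pEq]

theorem pEq_map (p : Polynomial F) : pEq F N (p.map C) = C p := by
  induction p using Polynomial.induction_on' with
  | add p q hp hq => rw [Polynomial.map_add, map_add, hp, hq, map_add]
  | monomial n a =>
    rw [← Polynomial.C_mul_X_pow_eq_monomial, Polynomial.map_mul, Polynomial.map_pow,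
      Polynomial.map_C, Polynomial.map_X, map_mul, map_pow, pEq_CC, pEq_X, map_mul, map_pow]

theorem pEq_lin (v : Fin N → F) :
    pEq F N (Polynomial.C (lin v)) = ∑ i, C (Polynomial.C (v i)) * X i := by
  rw [lin_apply, map_sum, map_sum]
  exact Finset.sum_congr rfl fun i _ => by rw [map_mul, map_mul, pEq_CC, pEq_CX]

theorem loc_mem {σ : Type*} (A B : Type*) [CommRing A] [IsDomain A] [CommRing B] [Algebra A B]
    [IsLocalization (nonZeroDivisors A) B] (J : Ideal (MvPolynomial σ A)) (x : MvPolynomial σ A)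
    (h : MvPolynomial.map (algebraMap A B) x ∈ J.map (MvPolynomial.map (algebraMap A B))) :
    ∃ p : A, p ≠ 0 ∧ C p * x ∈ J := by
  let _ : Algebra (MvPolynomial σ A) (MvPolynomial σ B) := MvPolynomial.algebraMvPolynomial
  have h' : algebraMap (MvPolynomial σ A) (MvPolynomial σ B) x ∈
    J.map (algebraMap (MvPolynomial σ A) (MvPolynomial σ B)) := h
  rw [IsLocalization.algebraMap_mem_map_algebraMap_iff
    ((nonZeroDivisors A).map (C (σ := σ)))] at h'
  obtain ⟨_, ⟨p, hp, rfl⟩, hm⟩ := h'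
  exact ⟨p, nonZeroDivisors.ne_zero hp, hm⟩

theorem I2_le_LI {k : ℕ} (r1 r2 : Fin k → Fin N → F) : I2 r1 r2 ≤ LI r1 := by
  rw [I2, Ideal.span_le]
  rintro _ ⟨⟨i, j⟩, rfl⟩
  exact sub_mem (Ideal.mul_mem_right _ _ (Ideal.subset_span ⟨i, rfl⟩))
    (Ideal.mul_mem_right _ _ (Ideal.subset_span ⟨j, rfl⟩))

theorem I2_le_LI2 {k : ℕ} (r1 r2 : Fin k → Fin N → F) : I2 r1 r2 ≤ LI r2 := by
  rw [I2, Ideal.span_le]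
  rintro _ ⟨⟨i, j⟩, rfl⟩
  exact sub_mem (Ideal.mul_mem_left _ _ (Ideal.subset_span ⟨j, rfl⟩))
    (Ideal.mul_mem_left _ _ (Ideal.subset_span ⟨i, rfl⟩))

/-- generic combination of rows -/
noncomputable def rho {k : ℕ} (r1 r2 : Fin k → Fin N → F) (j : Fin k) (i : Fin N) :
    FractionRing (Polynomial F) :=
  algebraMap (Polynomial F) _ (Polynomial.C (r2 j i) - Polynomial.X * Polynomial.C (r1 j i))

theorem LI_rho {k : ℕ} (r1 r2 : Fin k → Fin N → F) :
    LI (rho r1 r2) = ((QI r1 r2).map (pEq F N)).map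
      (MvPolynomial.map (algebraMap (Polynomial F) (FractionRing (Polynomial F)))) := by
  rw [QI, Ideal.map_span, Ideal.map_span, LI, ← Set.range_comp, ← Set.range_comp]
  congr 2
  funext j
  simp only [Function.comp_apply, map_sub, map_mul, pEq_lin, pEq_X]
  rw [lin_apply, map_sum, map_sum, Finset.mul_sum, ← Finset.sum_sub_distrib]
  refine Finset.sum_congr rfl fun i _ => ?_
  simp only [rho, map_mul, map_X, map_C, map_sub]
  ring

theorem I2_prime [IsAlgClosed F] {k : ℕ} (r1 r2 : Fin k → Fin N → F)
    (h1 : LinearIndependent F r1)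
    (hr : ∀ l : F, LinearIndependent F (fun j => r2 j - l • r1 j)) : (I2 r1 r2).IsPrime := by
  have hiff : ∀ f, f ∈ I2 r1 r2 ↔ MvPolynomial.map (algebraMap (Polynomial F) (FractionRing (Polynomial F))) (pEq F N (Polynomial.C f)) ∈
        LI (rho r1 r2) := by
    intro f
    rw [LI_rho]
    constructor
    · intro hf
      exact Ideal.mem_map_of_mem _ (Ideal.mem_map_of_mem _ (C_I2_le r1 r2 f hf))
    · intro hf
      obtain ⟨p, hp, hm⟩ := loc_mem _ _ _ _ hf
      apply QI_C r1 r2 h1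
      apply QI_cancel_poly r1 r2 hr p hp
      rw [← pEq_map, ← map_mul] at hm
      obtain ⟨z, hz, hze⟩ := (Ideal.mem_map_iff_of_surjective _ (pEq F N).surjective).1 hm
      rwa [(pEq F N).injective hze] at hz
  refine ⟨fun h => (LI_prime r1).ne_top (top_le_iff.1 (h ▸ I2_le_LI r1 r2)), fun {f g} hfg => ?_⟩
  rw [hiff, map_mul, map_mul, map_mul] at hfg
  rw [hiff, hiff]
  exact (LI_prime _).mem_or_mem hfg

theorem lin_notMem_I2 {k : ℕ} (r1 r2 : Fin k → Fin N → F) (v : Fin N → F) (hv : v ≠ 0) :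
    lin v ∉ I2 r1 r2 := by
  intro h
  obtain ⟨i, hi⟩ := Function.ne_iff.1 hv
  let φ : MvPolynomial (Fin N) F →ₐ[F] Polynomial F :=
    aeval (fun j => if j = i then Polynomial.X else 0)
  have hφ : ∀ w, φ (lin w) = Polynomial.C (w i) * Polynomial.X := by
    intro w
    rw [lin_apply, map_sum]
    simp [φ]
  have hle : I2 r1 r2 ≤ (Ideal.span {(Polynomial.X : Polynomial F) ^ 2}).comap φ := by
    rw [I2, Ideal.span_le]
    rintro _ ⟨⟨a, b⟩, rfl⟩
    simp only [SetLike.mem_coe, Ideal.mem_comap, map_sub, map_mul, hφ, Ideal.mem_span_singleton]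
    exact ⟨Polynomial.C (r1 a i) * Polynomial.C (r2 b i) -
      Polynomial.C (r1 b i) * Polynomial.C (r2 a i), by ring⟩
  have h2 := hle h
  rw [Ideal.mem_comap, hφ, Ideal.mem_span_singleton, Polynomial.X_pow_dvd_iff] at h2
  have := h2 1 (by norm_num)
  simp at this
  exact hi this
end I2prime

section I2pd

theorem link_colon {R : Type*} [CommRing R] (P L : Ideal R) [hP : P.IsPrime] (q : R) (hq : q ∉ P)
    (hle : P ≤ L) (g : R) : g ∈ L ↔ q * g ∈ P ⊔ Ideal.span {q} * L := by
  constructor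
  · intro hg
    exact Ideal.mem_sup_right (Ideal.mem_span_singleton_mul.2 ⟨g, hg, rfl⟩)
  · intro h
    obtain ⟨p, hp, z, hz, e⟩ := Submodule.mem_sup.1 h
    obtain ⟨l, hl, rfl⟩ := Ideal.mem_span_singleton_mul.1 hz
    have h2 : q * (g - l) ∈ P := by
      rw [mul_sub, ← e, add_sub_cancel_right]; exact hp
    have h3 := hle ((hP.mem_or_mem h2).resolve_left hq)
    simpa using add_mem h3 hl

theorem link_sup {R : Type*} [CommRing R] (P L : Ideal R) (q : R) :
    P ⊔ Ideal.span {q} = (P ⊔ Ideal.span {q} * L) ⊔ Ideal.span {q} := by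
  rw [sup_assoc, sup_eq_right.2 (Ideal.mul_le_left : Ideal.span {q} * L ≤ Ideal.span {q})]

theorem linkA {R : Type u} [CommRing R] (P L : Ideal R) [hP : P.IsPrime] (q : R) (hq : q ∉ P)
    (hle : P ≤ L) {n : ℕ} (h1 : PDI L n) (h2 : PDI (P ⊔ Ideal.span {q}) n) :
    PDI (P ⊔ Ideal.span {q} * L) n :=
  pd_mid _ _ _ q (link_colon P L q hq hle) (link_sup P L q) h1 h2

theorem linkB {R : Type u} [CommRing R] (P L : Ideal R) [hP : P.IsPrime] (q : R) (hq : q ∉ P)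
    (hle : P ≤ L) {n : ℕ} (h1 : PDI (P ⊔ Ideal.span {q} * L) n)
    (h2 : PDI (P ⊔ Ideal.span {q}) (n + 1)) : PDI L n :=
  pd_fst _ _ _ q (link_colon P L q hq hle) (link_sup P L q) h1 h2

variable {F : Type u} [Field F] {N : ℕ}

theorem I2_succ {k : ℕ} (r1 r2 : Fin (k + 1) → Fin N → F) :
    I2 r1 r2 = I2 (fun j : Fin k => r1 j.succ) (fun j => r2 j.succ) ⊔
      Ideal.span (Set.range fun j : Fin k =>
        lin (r1 j.succ) * lin (r2 0) - lin (r2 j.succ) * lin (r1 0)) := by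
  apply le_antisymm
  · rw [I2, Ideal.span_le]
    rintro _ ⟨⟨i, j⟩, rfl⟩
    rw [SetLike.mem_coe]
    dsimp only
    refine Fin.cases ?_ (fun i => ?_) i <;> refine Fin.cases ?_ (fun j => ?_) j
    · simp
    · apply Ideal.mem_sup_right
      rw [← neg_mem_iff]
      exact Ideal.subset_span ⟨j, by dsimp only; ring⟩
    · apply Ideal.mem_sup_right
      exact Ideal.subset_span ⟨i, by dsimp only; ring⟩
    · apply Ideal.mem_sup_left
      exact mem_I2 (fun j : Fin k => r1 j.succ) (fun j => r2 j.succ) i j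
  · refine sup_le ?_ ?_
    · rw [I2, Ideal.span_le]
      rintro _ ⟨⟨i, j⟩, rfl⟩
      exact mem_I2 r1 r2 i.succ j.succ
    · rw [Ideal.span_le]
      rintro _ ⟨j, rfl⟩
      have := mem_I2 r1 r2 j.succ 0
      rw [SetLike.mem_coe]
      dsimp only
      convert this using 1
      ring

theorem I2_pd [IsAlgClosed F] {k : ℕ} (r1 r2 : Fin (k + 1) → Fin N → F)
    (h1 : LinearIndependent F r1)
    (hr : ∀ l : F, LinearIndependent F (fun j => r2 j - l • r1 j)) : PDI (I2 r1 r2) k := by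
  induction k with
  | zero =>
    have : I2 r1 r2 = ⊥ := by
      rw [I2, Ideal.span_eq_bot]
      rintro _ ⟨⟨i, j⟩, rfl⟩
      rw [show i = j from Fin.ext (by omega)]
      simp
    rw [this]; exact pd_bot
  | succ k ih =>
    let s : Fin (k + 1) → Fin N → F := fun j => r1 j.succ
    let t : Fin (k + 1) → Fin N → F := fun j => r2 j.succ
    have hs : LinearIndependent F s := h1.comp _ (Fin.succ_injective _)
    have ht : ∀ l : F, LinearIndependent F (fun j => t j - l • s j) :=
      fun l => (hr l).comp _ (Fin.succ_injective _)
    have hP0 := ih s t hs ht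
    have hpr : (I2 s t).IsPrime := I2_prime s t hs ht
    have hP : I2 r1 r2 = I2 s t ⊔ Ideal.span (Set.range fun j : Fin (k + 1) =>
        lin (s j) * lin (r2 0) - lin (t j) * lin (r1 0)) := I2_succ r1 r2
    have hx : lin (s 0) ∉ I2 s t := lin_notMem_I2 s t _ (hs.ne_zero 0)
    have hle : I2 s t ≤ I2 r1 r2 := hP ▸ le_sup_left
    have hgen : ∀ j, lin (s j) * lin (r2 0) - lin (t j) * lin (r1 0) ∈ I2 r1 r2 := fun j => by
      rw [hP]; exact Ideal.mem_sup_right (Ideal.subset_span ⟨j, rfl⟩)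
    obtain ⟨q, hq⟩ : ∃ q, q = lin (s 0) * lin (r2 0) - lin (t 0) * lin (r1 0) := ⟨_, rfl⟩
    have rel : ∀ j, lin (s 0) * (lin (s j) * lin (r2 0) - lin (t j) * lin (r1 0)) =
        q * lin (s j) + lin (r1 0) * (lin (s j) * lin (t 0) - lin (s 0) * lin (t j)) := fun j => by
      rw [hq]; ring
    by_cases hqm : q ∈ I2 s t
    · have : I2 r1 r2 = I2 s t := by
        rw [hP, sup_eq_left, Ideal.span_le]
        rintro _ ⟨j, rfl⟩
        refine (hpr.mem_or_mem (x := lin (s 0)) ?_).resolve_left hx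
        dsimp only
        rw [rel j]
        exact add_mem (Ideal.mul_mem_right _ _ hqm) (Ideal.mul_mem_left _ _ (mem_I2 s t j 0))
      rw [this]; exact hP0.mono (by omega)
    · have hJ : I2 s t ⊔ Ideal.span {lin (s 0)} * I2 r1 r2 = I2 s t ⊔ Ideal.span {q} * LI s := by
        apply le_antisymm
        · refine sup_le le_sup_left ?_
          rw [hP, Ideal.mul_sup]
          refine sup_le (le_trans Ideal.mul_le_right le_sup_left) ?_
          rw [Ideal.span_mul_span', Ideal.span_le]
          rintro _ ⟨_, rfl, _, ⟨j, rfl⟩, rfl⟩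
          rw [SetLike.mem_coe]
          dsimp only
          rw [rel j]
          refine add_mem (Ideal.mem_sup_right ?_) (Ideal.mem_sup_left ?_)
          · exact Ideal.mul_mem_mul (Ideal.mem_span_singleton_self q) (Ideal.subset_span ⟨j, rfl⟩)
          · exact Ideal.mul_mem_left _ _ (mem_I2 s t j 0)
        · refine sup_le le_sup_left ?_
          rw [LI, Ideal.span_mul_span', Ideal.span_le]
          rintro _ ⟨_, rfl, _, ⟨j, rfl⟩, rfl⟩
          rw [SetLike.mem_coe]
          dsimp only
          rw [← sub_eq_iff_eq_add.2 (rel j)]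
          refine sub_mem (Ideal.mem_sup_right ?_) (Ideal.mem_sup_left ?_)
          · exact Ideal.mul_mem_mul (Ideal.mem_span_singleton_self _) (hgen j)
          · exact Ideal.mul_mem_left _ _ (mem_I2 s t j 0)
      apply linkB (I2 s t) (I2 r1 r2) _ hx hle
      · rw [hJ]
        exact linkA _ _ _ hqm (I2_le_LI s t) (LI_pd s) (pd_prime _ _ hP0)
      · exact (pd_prime _ _ hP0).mono (by omega)
end I2pd

section Main
variable {F : Type u} [Field F] {N : ℕ}

/-- the ideal of the theorem -/
noncomputable def MI {m : ℕ} (r1 r2 : Fin (m + 1) → Fin N → F) (p q : Fin N → F) :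
    Ideal (MvPolynomial (Fin N) F) :=
  Ideal.span {lin (r1 0) * lin q} ⊔ Ideal.span {lin (r2 0) * lin p} ⊔
    Ideal.span (Set.range fun j : Fin m =>
      lin (r1 0) * lin (r2 j.succ) - lin (r2 0) * lin (r1 j.succ))

theorem MI_swap {m : ℕ} (r1 r2 : Fin (m + 1) → Fin N → F) (p q : Fin N → F) :
    MI r1 r2 p q = MI r2 r1 q p := by
  have h : ∀ (r1 r2 : Fin (m + 1) → Fin N → F) (p q : Fin N → F),
      MI r1 r2 p q ≤ MI r2 r1 q p := by
    intro r1 r2 p q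
    refine sup_le (sup_le ?_ ?_) ?_
    · exact le_sup_right.trans le_sup_left
    · exact le_sup_left.trans le_sup_left
    · refine le_trans ?_ le_sup_right
      rw [Ideal.span_le]
      rintro _ ⟨j, rfl⟩
      rw [SetLike.mem_coe, ← neg_mem_iff]
      exact Ideal.subset_span ⟨j, by dsimp only; ring⟩
  exact le_antisymm (h _ _ _ _) (h _ _ _ _)

theorem MI_q {m : ℕ} (r1 r2 : Fin (m + 1) → Fin N → F) (p q : Fin N → F) :
    lin (r1 0) * lin q ∈ MI r1 r2 p q :=
  Ideal.mem_sup_left (Ideal.mem_sup_left (Ideal.mem_span_singleton_self _))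

theorem MI_p {m : ℕ} (r1 r2 : Fin (m + 1) → Fin N → F) (p q : Fin N → F) :
    lin (r2 0) * lin p ∈ MI r1 r2 p q :=
  Ideal.mem_sup_left (Ideal.mem_sup_right (Ideal.mem_span_singleton_self _))

theorem MI_gen {m : ℕ} (r1 r2 : Fin (m + 1) → Fin N → F) (p q : Fin N → F) (j : Fin (m + 1)) :
    lin (r1 0) * lin (r2 j) - lin (r2 0) * lin (r1 j) ∈ MI r1 r2 p q := by
  refine Fin.cases ?_ (fun j => ?_) j
  · rw [mul_comm, sub_self]; exact zero_mem _
  · exact Ideal.mem_sup_right (Ideal.subset_span ⟨j, rfl⟩)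

theorem prime_sup_lin {k : ℕ} (r1 r2 : Fin k → Fin N → F) (q : Fin N → F)
    (hq : q ∉ Submodule.span F (Set.range r1 ∪ Set.range r2)) [hp : (I2 r1 r2).IsPrime] :
    (I2 r1 r2 ⊔ Ideal.span {lin q}).IsPrime := by
  obtain ⟨l, hl, hker⟩ := Submodule.exists_le_ker_of_notMem hq
  let π : (Fin N → F) →ₗ[F] (Fin N → F) := LinearMap.id - ((l q)⁻¹ • l).smulRight q
  have hπ : ∀ v, π v = v - ((l q)⁻¹ * l v) • q := fun v => by simp [π]
  have hπ1 : ∀ j, π (r1 j) = r1 j := fun j => by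
    have : l (r1 j) = 0 := hker (Submodule.subset_span (Or.inl ⟨j, rfl⟩))
    rw [hπ, this]; simp
  have hπ2 : ∀ j, π (r2 j) = r2 j := fun j => by
    have : l (r2 j) = 0 := hker (Submodule.subset_span (Or.inr ⟨j, rfl⟩))
    rw [hπ, this]; simp
  have hπq : π q = 0 := by rw [hπ, inv_mul_cancel₀ hl]; simp
  have hle : I2 r1 r2 ≤ (I2 r1 r2).comap (lsub π) := by
    conv_lhs => rw [I2]
    rw [Ideal.span_le]
    rintro _ ⟨⟨i, j⟩, rfl⟩
    rw [SetLike.mem_coe, Ideal.mem_comap]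
    simp only [map_sub, map_mul, lsub_lin, hπ1, hπ2]
    exact mem_I2 r1 r2 i j
  have : I2 r1 r2 ⊔ Ideal.span {lin q} = (I2 r1 r2).comap (lsub π) := by
    apply le_antisymm
    · refine sup_le hle ?_
      rw [Ideal.span_singleton_le_iff_mem, Ideal.mem_comap, lsub_lin, hπq, map_zero]
      exact zero_mem _
    · intro f hf
      have h1 := sub_lsub_mem π (Ideal.span {lin q}) (fun v => by
        rw [hπ, sub_sub_cancel, map_smul, MvPolynomial.smul_eq_C_mul]
        exact Ideal.mul_mem_left _ _ (Ideal.mem_span_singleton_self _)) f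
      have := add_mem (Ideal.mem_sup_right (S := I2 r1 r2) h1) (Ideal.mem_sup_left hf)
      simpa using this
  rw [this]
  exact Ideal.comap_isPrime _ _

theorem colon_char {m : ℕ} (r1 r2 : Fin (m + 1) → Fin N → F) (p q : Fin N → F)
    (hxy : LinearIndependent F ![r1 0, r2 0]) (f : MvPolynomial (Fin N) F)
    (hf : lin (r1 0) * f ∈ MI r1 r2 p q) :
    ∃ (g' h : MvPolynomial (Fin N) F) (g : Fin (m + 1) → MvPolynomial (Fin N) F),
      ∑ j, g j * lin (r1 j) = h * lin p ∧ f = g' * lin q + ∑ j, g j * lin (r2 j) := by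
  obtain ⟨e, he, e3, he3, hs⟩ := Submodule.mem_sup.1 hf
  obtain ⟨e1, he1, e2, he2, rfl⟩ := Submodule.mem_sup.1 he
  obtain ⟨g', rfl⟩ := Ideal.mem_span_singleton'.1 he1
  obtain ⟨h, rfl⟩ := Ideal.mem_span_singleton'.1 he2
  obtain ⟨c, rfl⟩ := Ideal.mem_span_range_iff_exists_fun.1 he3
  simp only [mul_sub, Finset.sum_sub_distrib] at hs
  have e1 : ∑ j, c j * (lin (r1 0) * lin (r2 j.succ)) =
      lin (r1 0) * ∑ j, c j * lin (r2 j.succ) := by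
    rw [Finset.mul_sum]; exact Finset.sum_congr rfl fun j _ => by ring
  have e2 : ∑ j, c j * (lin (r2 0) * lin (r1 j.succ)) =
      lin (r2 0) * ∑ j, c j * lin (r1 j.succ) := by
    rw [Finset.mul_sum]; exact Finset.sum_congr rfl fun j _ => by ring
  rw [e1, e2] at hs
  obtain ⟨B, hB⟩ := koszul ![r1 0, r2 0] hxy
    ![f - g' * lin q - ∑ j, c j * lin (r2 j.succ), -(h * lin p - ∑ j, c j * lin (r1 j.succ))] (by
      simp only [Fin.sum_univ_two, Matrix.cons_val_zero, Matrix.cons_val_one]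
      linear_combination -hs)
  have h0 := hB 0
  have h1 := hB 1
  simp only [Fin.sum_univ_two, Matrix.cons_val_zero, Matrix.cons_val_one, sub_self, zero_mul,
    zero_add, add_zero] at h0 h1
  refine ⟨g', h, Fin.cons (B 0 1 - B 1 0) c, ?_, ?_⟩
  · rw [Fin.sum_univ_succ]
    simp only [Fin.cons_zero, Fin.cons_succ]
    linear_combination h1
  · rw [Fin.sum_univ_succ]
    simp only [Fin.cons_zero, Fin.cons_succ]
    linear_combination h0

theorem caseB [IsAlgClosed F] {m : ℕ} (r1 r2 : Fin (m + 1) → Fin N → F) (p q : Fin N → F)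
    (H : ∀ a b : F, (a ≠ 0 ∨ b ≠ 0) → LinearIndependent F (fun j => a • r1 j + b • r2 j))
    (hq : q ∉ Submodule.span F (Set.range r1 ∪ Set.range r2)) : PDI (MI r1 r2 p q) (m + 2) := by
  have hr1 : LinearIndependent F r1 := by simpa using H 1 0 (by simp)
  have hr2 : ∀ l : F, LinearIndependent F (fun j => r2 j - l • r1 j) := fun l => by
    have := H (-l) 1 (by simp)
    convert this using 2
    simp [sub_eq_neg_add]
  have hxy : LinearIndependent F ![r1 0, r2 0] := by
    rw [LinearIndependent.pair_iff]
    intro s t hst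
    by_contra hne
    rw [not_and_or] at hne
    exact (H s t hne).ne_zero 0 hst
  have hP : (I2 r1 r2).IsPrime := I2_prime r1 r2 hr1 hr2
  have hPpd : PDI (I2 r1 r2) m := I2_pd r1 r2 hr1 hr2
  have hPA := prime_sup_lin r1 r2 q hq
  have hPApd : PDI (I2 r1 r2 ⊔ Ideal.span {lin q}) (m + 1) := pd_prime _ _ hPpd
  -- the sum with the first variable
  have hsum : PDI (MI r1 r2 p q ⊔ Ideal.span {lin (r1 0)}) (m + 2) := by
    let L : Fin (m + 2) → Fin N → F := Fin.cons p r1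
    have hr0 : LI (fun _ : Fin 1 => r1 0) = Ideal.span {lin (r1 0)} := by
      rw [LI, Set.range_const]
    have hy : lin (r2 0) ∉ LI (fun _ : Fin 1 => r1 0) := by
      rw [lin_mem_LI_iff, Set.range_const, Submodule.mem_span_singleton]
      rintro ⟨c, hc⟩
      have := LinearIndependent.pair_iff.1 hxy c (-1) (by rw [hc]; simp)
      simp at this
    have hle : LI (fun _ : Fin 1 => r1 0) ≤ LI L := by
      rw [hr0, Ideal.span_singleton_le_iff_mem]
      exact Ideal.subset_span ⟨1, rfl⟩
    have hk := linkA _ (LI L) _ hy hle (n := m + 2) (LI_pd L)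
      ((pd_prime _ _ (LI_pd _)).mono (by omega))
    have heq : MI r1 r2 p q ⊔ Ideal.span {lin (r1 0)} =
        LI (fun _ : Fin 1 => r1 0) ⊔ Ideal.span {lin (r2 0)} * LI L := by
      have hmem : ∀ j, lin (r2 0) * lin (L j) ∈
        LI (fun _ : Fin 1 => r1 0) ⊔ Ideal.span {lin (r2 0)} * LI L := fun j =>
        Ideal.mem_sup_right (Ideal.mul_mem_mul (Ideal.mem_span_singleton_self _)
          (Ideal.subset_span ⟨j, rfl⟩))
      have hx0 : lin (r1 0) ∈ LI (fun _ : Fin 1 => r1 0) ⊔ Ideal.span {lin (r2 0)} * LI L :=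
        Ideal.mem_sup_left (Ideal.subset_span ⟨0, rfl⟩)
      apply le_antisymm
      · refine sup_le (sup_le (sup_le ?_ ?_) ?_) ?_
        · rw [Ideal.span_singleton_le_iff_mem]
          exact Ideal.mul_mem_right _ _ hx0
        · rw [Ideal.span_singleton_le_iff_mem]
          exact hmem 0
        · rw [Ideal.span_le]
          rintro _ ⟨j, rfl⟩
          exact sub_mem (Ideal.mul_mem_right _ _ hx0) (hmem j.succ.succ)
        · rw [Ideal.span_singleton_le_iff_mem]
          exact hx0
      · refine sup_le ?_ ?_
        · rw [hr0]; exact le_sup_right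
        · rw [LI, Ideal.span_mul_span', Ideal.span_le]
          rintro _ ⟨_, rfl, _, ⟨j, rfl⟩, rfl⟩
          rw [SetLike.mem_coe]
          dsimp only
          refine Fin.cases ?_ (fun j => ?_) j
          · exact Ideal.mem_sup_left (MI_p r1 r2 p q)
          · have h1 := Ideal.mem_sup_left (T := Ideal.span {lin (r1 0)}) (MI_gen r1 r2 p q j)
            have h2 : lin (r1 0) * lin (r2 j) ∈ MI r1 r2 p q ⊔ Ideal.span {lin (r1 0)} :=
              Ideal.mul_mem_right _ _ (Ideal.mem_sup_right (Ideal.mem_span_singleton_self _))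
            have := sub_mem h2 h1
            rwa [sub_sub_cancel] at this
    rw [heq]; exact hk
  -- the colon ideal
  have hcol1 : ∀ g, g ∈ I2 r1 r2 ⊔ Ideal.span {lin q} → lin (r1 0) * g ∈ MI r1 r2 p q := by
    suffices I2 r1 r2 ⊔ Ideal.span {lin q} ≤
      Submodule.comap (LinearMap.mulLeft _ (lin (r1 0))) (MI r1 r2 p q) from fun g hg => this hg
    refine sup_le ?_ ?_
    · rw [I2, Ideal.span_le]
      rintro _ ⟨⟨i, j⟩, rfl⟩
      have := sub_mem (Ideal.mul_mem_left _ (lin (r1 i)) (MI_gen r1 r2 p q j))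
        (Ideal.mul_mem_left _ (lin (r1 j)) (MI_gen r1 r2 p q i))
      rw [SetLike.mem_coe, Submodule.mem_comap, LinearMap.mulLeft_apply]
      convert this using 1
      ring
    · rw [Ideal.span_singleton_le_iff_mem]
      exact MI_q r1 r2 p q
  by_cases hp : p ∈ Submodule.span F (Set.range r1)
  · obtain ⟨w, hw⟩ := (Submodule.mem_span_range_iff_exists_fun F).1 hp
    have hwl : ∑ j, C (w j) * lin (r1 j) = lin p := by
      rw [← hw, map_sum]
      exact Finset.sum_congr rfl fun j _ => by rw [map_smul, MvPolynomial.smul_eq_C_mul]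
    refine pd_mid (MI r1 r2 p q) ((I2 r1 r2 ⊔ Ideal.span {lin q}) ⊔
      Ideal.span {∑ j, C (w j) * lin (r2 j)}) _ (lin (r1 0)) ?_ rfl (pd_prime _ _ hPApd) hsum
    intro f
    constructor
    · intro hf
      obtain ⟨f1, hf1, f2, hf2, rfl⟩ := Submodule.mem_sup.1 hf
      obtain ⟨c, rfl⟩ := Ideal.mem_span_singleton'.1 hf2
      rw [mul_add]
      refine add_mem (hcol1 _ hf1) ?_
      rw [mul_left_comm]
      apply Ideal.mul_mem_left
      have : lin (r1 0) * ∑ j, C (w j) * lin (r2 j) =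
          ∑ j, C (w j) * (lin (r1 0) * lin (r2 j) - lin (r2 0) * lin (r1 j)) +
          lin (r2 0) * lin p := by
        rw [← hwl, Finset.mul_sum, Finset.mul_sum, ← Finset.sum_add_distrib]
        exact Finset.sum_congr rfl fun j _ => by ring
      rw [this]
      exact add_mem (Ideal.sum_mem _ fun j _ => Ideal.mul_mem_left _ _ (MI_gen r1 r2 p q j))
        (MI_p r1 r2 p q)
    · intro hf
      obtain ⟨g', h, g, hg, rfl⟩ := colon_char r1 r2 p q hxy f hf
      obtain ⟨B, hB⟩ := koszul r1 hr1 (fun j => g j - h * C (w j)) (by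
        rw [← sub_eq_zero.2 hg, ← hwl, Finset.mul_sum, ← Finset.sum_sub_distrib]
        exact Finset.sum_congr rfl fun j _ => by ring)
      have h1 := alt_mem r1 r2 B
      simp only [← hB] at h1
      have h2 : g' * lin q + ∑ j, g j * lin (r2 j) = (∑ j, (g j - h * C (w j)) * lin (r2 j)) +
          g' * lin q + h * ∑ j, C (w j) * lin (r2 j) := by
        have : ∑ j, g j * lin (r2 j) = (∑ j, (g j - h * C (w j)) * lin (r2 j)) +
           h * ∑ j, C (w j) * lin (r2 j) := by
          rw [Finset.mul_sum, ← Finset.sum_add_distrib]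
          exact Finset.sum_congr rfl fun j _ => by ring
        rw [this]; ring
      rw [h2]
      exact add_mem (Ideal.mem_sup_left (add_mem (Ideal.mem_sup_left h1) (Ideal.mem_sup_right
        (Ideal.mul_mem_left _ _ (Ideal.mem_span_singleton_self _)))))
        (Ideal.mem_sup_right (Ideal.mul_mem_left _ _ (Ideal.mem_span_singleton_self _)))
  · have hX : PDI ((I2 r1 r2 ⊔ Ideal.span {lin q}) ⊔
        Ideal.span {lin p} * (LI r2 ⊔ Ideal.span {lin q})) (m + 2) := by
      by_cases hpm : lin p ∈ I2 r1 r2 ⊔ Ideal.span {lin q}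
      · have : (I2 r1 r2 ⊔ Ideal.span {lin q}) ⊔
          Ideal.span {lin p} * (LI r2 ⊔ Ideal.span {lin q}) = I2 r1 r2 ⊔ Ideal.span {lin q} := by
          rw [sup_eq_left]
          exact le_trans Ideal.mul_le_left ((Ideal.span_singleton_le_iff_mem _).2 hpm)
        rw [this]; exact hPApd.mono (by omega)
      · exact linkA _ _ _ hpm (sup_le_sup_right (I2_le_LI2 r1 r2) _) (pd_prime _ _ (LI_pd r2))
          (pd_prime _ _ hPApd)
    refine pd_mid (MI r1 r2 p q) _ _ (lin (r1 0)) ?_ rfl hX hsum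
    intro f
    constructor
    · intro hf
      obtain ⟨f1, hf1, f2, hf2, rfl⟩ := Submodule.mem_sup.1 hf
      rw [mul_add]
      refine add_mem (hcol1 _ hf1) ?_
      obtain ⟨z, hz, rfl⟩ := Ideal.mem_span_singleton_mul.1 hf2
      obtain ⟨z1, hz1, z2, hz2, rfl⟩ := Submodule.mem_sup.1 hz
      obtain ⟨c, rfl⟩ := Ideal.mem_span_range_iff_exists_fun.1 hz1
      obtain ⟨d, rfl⟩ := Ideal.mem_span_singleton'.1 hz2
      have : lin (r1 0) * (lin p * (∑ j, c j * lin (r2 j) + d * lin q)) =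
          lin p * ∑ j, c j * (lin (r1 0) * lin (r2 j) - lin (r2 0) * lin (r1 j)) +
          (∑ j, c j * lin (r1 j)) * (lin (r2 0) * lin p) +
          (lin p * d) * (lin (r1 0) * lin q) := by
        have e : ∑ j, c j * (lin (r1 0) * lin (r2 j) - lin (r2 0) * lin (r1 j)) =
          lin (r1 0) * (∑ j, c j * lin (r2 j)) - lin (r2 0) * ∑ j, c j * lin (r1 j) := by
          rw [Finset.mul_sum, Finset.mul_sum, ← Finset.sum_sub_distrib]
          exact Finset.sum_congr rfl fun j _ => by ring
        rw [e]; ring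
      rw [this]
      exact add_mem (add_mem (Ideal.mul_mem_left _ _ (Ideal.sum_mem _ fun j _ =>
        Ideal.mul_mem_left _ _ (MI_gen r1 r2 p q j))) (Ideal.mul_mem_left _ _ (MI_p r1 r2 p q)))
        (Ideal.mul_mem_left _ _ (MI_q r1 r2 p q))
    · intro hf
      obtain ⟨g', h, g, hg, rfl⟩ := colon_char r1 r2 p q hxy f hf
      have hli : LinearIndependent F (Fin.cons p r1 : Fin (m + 2) → Fin N → F) :=
        linearIndependent_finCons.2 ⟨hr1, hp⟩
      obtain ⟨B, hB⟩ := koszul _ hli (Fin.cons (-h) g) (by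
        rw [Fin.sum_univ_succ]
        simp only [Fin.cons_zero, Fin.cons_succ]
        rw [hg]; ring)
      have h1 := alt_mem r1 r2 (fun i j => B i.succ j.succ)
      have hgi : ∀ i, g i = (B i.succ 0 - B 0 i.succ) * lin p +
          ∑ j, (B i.succ (Fin.succ j) - B (Fin.succ j) i.succ) * lin (r1 j) := fun i => by
        have := hB i.succ
        rw [Fin.sum_univ_succ] at this
        simpa only [Fin.cons_zero, Fin.cons_succ] using this
      have h2 : ∑ i, g i * lin (r2 i) = lin p * (∑ i, (B i.succ 0 - B 0 i.succ) * lin (r2 i)) +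
          ∑ i, (∑ j, (B i.succ (Fin.succ j) - B (Fin.succ j) i.succ) * lin (r1 j)) * lin (r2 i) := by
        rw [Finset.mul_sum, ← Finset.sum_add_distrib]
        exact Finset.sum_congr rfl fun i _ => by rw [hgi i]; ring
      rw [h2]
      refine add_mem ?_ (add_mem ?_ ?_)
      · exact Ideal.mem_sup_left (Ideal.mem_sup_right
          (Ideal.mul_mem_left _ _ (Ideal.mem_span_singleton_self _)))
      · refine Ideal.mem_sup_right (Ideal.mul_mem_mul (Ideal.mem_span_singleton_self _)
          (Ideal.mem_sup_left (Ideal.sum_mem _ fun j _ => Ideal.mul_mem_left _ _ ?_)))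
        exact Ideal.subset_span ⟨j, rfl⟩
      · exact Ideal.mem_sup_left (Ideal.mem_sup_left h1)
end Main

section CaseA
variable {F : Type u} [Field F] {N : ℕ}

theorem flat_rename_inr (S T : Type) :
    ((rename Sum.inr : MvPolynomial T F →ₐ[F] MvPolynomial (S ⊕ T) F) :
      MvPolynomial T F →+* MvPolynomial (S ⊕ T) F).Flat := by
  have h : ((rename Sum.inr : MvPolynomial T F →ₐ[F] MvPolynomial (S ⊕ T) F) :
      MvPolynomial T F →+* MvPolynomial (S ⊕ T) F) =
      ((sumAlgEquiv F S T).symm : MvPolynomial S (MvPolynomial T F) →+* _).comp C := by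
    apply MvPolynomial.ringHom_ext
    · intro r; simp
    · intro i; simp
  rw [h]
  refine RingHom.Flat.comp ?_ (RingHom.Flat.of_bijective (sumAlgEquiv F S T).symm.bijective)
  rw [← MvPolynomial.algebraMap_eq, RingHom.flat_algebraMap_iff]
  infer_instance

theorem flat_comp_alg {A B D : Type*} [CommRing A] [CommRing B] [CommRing D] [Algebra F A]
    [Algebra F B] [Algebra F D] (f : A →ₐ[F] B) (g : B →ₐ[F] D) (hf : (f : A →+* B).Flat)
    (hg : Function.Bijective g) : ((g.comp f : A →ₐ[F] D) : A →+* D).Flat :=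
  RingHom.Flat.comp (f := (f : A →+* B)) (g := (g : B →+* D)) hf (RingHom.Flat.of_bijective hg)

theorem exists_ext_basis {d : ℕ} (z : Fin d → Fin N → F) (hz : LinearIndependent F z) :
    ∃ (c : ℕ) (e : Fin c ⊕ Fin d ≃ Fin N) (b' : Module.Basis (Fin N) F (Fin N → F)),
      ∀ i, b' (e (Sum.inr i)) = z i := by
  classical
  obtain ⟨b, hb⟩ : ∃ b : Module.Basis (Fin d ⊕ Module.Basis.sumExtendIndex hz) F (Fin N → F),
      ∀ i, b (Sum.inl i) = z i := by
    refine ⟨Module.Basis.sumExtend hz, fun i => ?_⟩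
    simp [Module.Basis.sumExtend]
    rfl
  have hfin : Finite (Fin d ⊕ Module.Basis.sumExtendIndex hz) := Module.Finite.finite_basis b
  have hcard : Nat.card (Fin d ⊕ Module.Basis.sumExtendIndex hz) = N := by
    rw [← Module.finrank_eq_nat_card_basis b]; simp
  have hf2 : Finite (Module.Basis.sumExtendIndex hz) := Finite.of_injective
    (Sum.inr : _ → Fin d ⊕ Module.Basis.sumExtendIndex hz) Sum.inr_injective
  refine ⟨Nat.card (Module.Basis.sumExtendIndex hz), ((Equiv.sumComm _ _).trans
    (Equiv.sumCongr (Equiv.refl _) (Finite.equivFin _).symm)).trans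
    (Finite.equivFinOfCardEq hcard), b.reindex (Finite.equivFinOfCardEq hcard), fun i => ?_⟩
  rw [← hb]
  simp only [Equiv.trans_apply, Module.Basis.reindex_apply, Equiv.symm_apply_apply]
  rfl

theorem flat_lin {d : ℕ} (z : Fin d → Fin N → F) (hz : LinearIndependent F z) :
    ((aeval fun i => lin (z i) : MvPolynomial (Fin d) F →ₐ[F] MvPolynomial (Fin N) F) :
      MvPolynomial (Fin d) F →+* MvPolynomial (Fin N) F).Flat := by
  classical
  obtain ⟨c, e, b', hb⟩ := exists_ext_basis z hz
  let A : (Fin N → F) ≃ₗ[F] (Fin N → F) := (Pi.basisFun F (Fin N)).equiv b' (Equiv.refl _)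
  have hA : ∀ i, A (Pi.single i 1) = b' i := fun i => by
    have := (Pi.basisFun F (Fin N)).equiv_apply i b' (Equiv.refl _)
    simpa using this
  have hcomp : ((aeval fun i => lin (z i) : MvPolynomial (Fin d) F →ₐ[F] MvPolynomial (Fin N) F)) =
      ((lsub (A : (Fin N → F) →ₗ[F] (Fin N → F))).comp
      ((renameEquiv F e : MvPolynomial (Fin c ⊕ Fin d) F ≃ₐ[F] MvPolynomial (Fin N) F) :
        MvPolynomial (Fin c ⊕ Fin d) F →ₐ[F] MvPolynomial (Fin N) F)).comp (rename Sum.inr) := by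
    apply MvPolynomial.algHom_ext
    intro i
    simp only [aeval_X, AlgHom.comp_apply, rename_X, AlgEquiv.coe_toAlgHom, renameEquiv_apply]
    rw [← lin_single, lsub_lin, LinearEquiv.coe_coe, hA, hb]
  have hbij : Function.Bijective (lsub (A : (Fin N → F) →ₗ[F] (Fin N → F))) := by
    have key : ∀ (A B : (Fin N → F) →ₗ[F] (Fin N → F)), (∀ v, A (B v) = v) →
        ∀ f, lsub A (lsub B f) = f := by
      intro A B hAB f
      have : (lsub A).comp (lsub B) = AlgHom.id F _ := by
        apply MvPolynomial.algHom_ext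
        intro i
        rw [AlgHom.comp_apply, ← lin_single, lsub_lin, lsub_lin, hAB]; rfl
      exact AlgHom.congr_fun this f
    refine Function.bijective_iff_has_inverse.2 ⟨lsub (A.symm : (Fin N → F) →ₗ[F] (Fin N → F)),
      key _ _ ?_, key _ _ ?_⟩ <;> intro v <;> simp
  rw [hcomp]
  refine flat_comp_alg _ _ (flat_rename_inr _ _) ?_
  rw [AlgHom.coe_comp]
  exact hbij.comp (renameEquiv F e).bijective

theorem caseA {m : ℕ} (r1 r2 : Fin (m + 1) → Fin N → F) (p q : Fin N → F)
    (hp : p ∈ Submodule.span F (Set.range r1 ∪ Set.range r2))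
    (hq : q ∈ Submodule.span F (Set.range r1 ∪ Set.range r2)) : PDI (MI r1 r2 p q) (2 * m + 2) := by
  classical
  obtain ⟨V, hV⟩ : ∃ V, V = Submodule.span F (Set.range r1 ∪ Set.range r2) := ⟨_, rfl⟩
  rw [← hV] at hp hq
  have h1 : ∀ j, r1 j ∈ V := fun j => hV ▸ Submodule.subset_span (Or.inl ⟨j, rfl⟩)
  have h2 : ∀ j, r2 j ∈ V := fun j => hV ▸ Submodule.subset_span (Or.inr ⟨j, rfl⟩)
  have hd : Module.finrank F V ≤ 2 * m + 2 := by
    have hr : Set.range r1 ∪ Set.range r2 = Set.range (Sum.elim r1 r2) := by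
      rw [Set.Sum.elim_range]
    rw [hV, hr]
    refine (finrank_range_le_card (R := F) (Sum.elim r1 r2)).trans ?_
    simp; omega
  let bz := Module.finBasis F V
  let z : Fin (Module.finrank F V) → Fin N → F := fun i => (bz i : Fin N → F)
  have hz : LinearIndependent F z := bz.linearIndependent.map' V.subtype (by simp)
  let φ : MvPolynomial (Fin (Module.finrank F V)) F →ₐ[F] MvPolynomial (Fin N) F :=
    aeval fun i => lin (z i)
  have hlin : ∀ v ∈ V, lin v ∈ φ.range := by
    intro v hv
    have h := congrArg (fun w : V => lin (w : Fin N → F)) (bz.sum_repr ⟨v, hv⟩)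
    simp only [Submodule.coe_sum, map_sum, Submodule.coe_smul, map_smul] at h
    rw [← h]
    refine Subalgebra.sum_mem _ fun i _ => Subalgebra.smul_mem _ ?_ _
    exact ⟨X i, by simp [φ, z]⟩
  obtain ⟨S, hS, hSr⟩ : ∃ S : Set (MvPolynomial (Fin N) F), MI r1 r2 p q = Ideal.span S ∧
      S ⊆ Set.range φ := by
    refine ⟨_, by rw [MI, ← Ideal.span_union, ← Ideal.span_union], ?_⟩
    have key : ∀ {s}, s ∈ φ.range → s ∈ Set.range φ := fun h => h
    rintro s ((rfl | rfl) | ⟨j, rfl⟩)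
    · exact key (mul_mem (hlin _ (h1 _)) (hlin _ hq))
    · exact key (mul_mem (hlin _ (h2 _)) (hlin _ hp))
    · exact key (sub_mem (mul_mem (hlin _ (h1 _)) (hlin _ (h2 _)))
        (mul_mem (hlin _ (h2 _)) (hlin _ (h1 _))))
  have hmap : MI r1 r2 p q = (Ideal.span (φ ⁻¹' S)).map (φ : _ →+* MvPolynomial (Fin N) F) := by
    rw [Ideal.map_span, hS]
    congr 1
    exact (Set.image_preimage_eq_of_subset hSr).symm
  rw [hmap]
  exact (pd_map_flat _ (flat_lin z hz) (GDLE_mvPolynomial F _) _).mono hd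

theorem MI_pd [IsAlgClosed F] {m : ℕ} (r1 r2 : Fin (m + 1) → Fin N → F) (p q : Fin N → F)
    (H : ∀ a b : F, (a ≠ 0 ∨ b ≠ 0) → LinearIndependent F (fun j => a • r1 j + b • r2 j)) :
    PDI (MI r1 r2 p q) (2 * m + 2) := by
  by_cases hq : q ∈ Submodule.span F (Set.range r1 ∪ Set.range r2)
  · by_cases hp : p ∈ Submodule.span F (Set.range r1 ∪ Set.range r2)
    · exact caseA r1 r2 p q hp hq
    · rw [MI_swap]
      refine (caseB r2 r1 q p (fun a b hab => ?_) (by rwa [Set.union_comm])).mono (by omega)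
      have := H b a hab.symm
      simpa only [add_comm] using this
  · exact (caseB r1 r2 p q H hq).mono (by omega)

end CaseA

/-- with `n = m + 2 ≥ 3`, if `I` is generated by `n` quadrics represented
by minors by `M = [[x, 0, a₁₂, a₁₃, …, a₁ₙ], [y, a₂₁, 0, a₂₃, …, a₂ₙ]]` with `x, y`
linearly independent linear forms and the submatrix `D` obtained by deleting the second
and third columns 1-generic, then `pd(R/I) ≤ 2n - 2`. -/
theorem stmt11 (K : Type u) [Field K] [IsAlgClosed K] (N m : ℕ) (hm : 1 ≤ m)
    (x y a₁₂ a₂₁ : MvPolynomial (Fin N) K) (hx : x.IsHomogeneous 1) (hy : y.IsHomogeneous 1)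
    (ha₁₂ : a₁₂.IsHomogeneous 1) (ha₂₁ : a₂₁.IsHomogeneous 1)
    (hxy : LinearIndependent K ![x, y])
    (u v : Fin m → MvPolynomial (Fin N) K)
    (hu : ∀ j, (u j).IsHomogeneous 1) (hv : ∀ j, (v j).IsHomogeneous 1)
    (I : Ideal (MvPolynomial (Fin N) K))
    (hI : I = repByMinors x y (Fin.cons 0 (Fin.cons a₁₂ u)) (Fin.cons a₂₁ (Fin.cons 0 v)))
    (h1g : OneGeneric K (Matrix.of ![Fin.cons x u, Fin.cons y v] : Matrix (Fin 2) (Fin (m + 1)) (MvPolynomial (Fin N) K))) :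
    projDim (MvPolynomial (Fin N) K) (MvPolynomial (Fin N) K ⧸ I) ≤ ((2 * (m + 2) - 2 : ℕ) : ℕ∞) := by
  obtain ⟨cx, rfl⟩ := exists_lin hx
  obtain ⟨cy, rfl⟩ := exists_lin hy
  obtain ⟨p, rfl⟩ := exists_lin ha₁₂
  obtain ⟨q, rfl⟩ := exists_lin ha₂₁
  choose cu hcu using fun j => exists_lin (hu j)
  choose cv hcv using fun j => exists_lin (hv j)
  obtain rfl : (fun j => lin (cu j)) = u := funext hcu
  obtain rfl : (fun j => lin (cv j)) = v := funext hcv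
  have hH : ∀ a b : K, (a ≠ 0 ∨ b ≠ 0) → LinearIndependent K (fun j : Fin (m + 1) =>
      a • (Fin.cons cx cu : Fin (m + 1) → Fin N → K) j +
      b • (Fin.cons cy cv : Fin (m + 1) → Fin N → K) j) := by
    intro a b hab
    rw [Fintype.linearIndependent_iff]
    intro w hw
    by_contra hne
    push Not at hne
    have hw0 : w ≠ 0 := fun h => by obtain ⟨i, hi⟩ := hne; exact hi (by rw [h]; rfl)
    have hab0 : ![a, b] ≠ 0 := fun h => by
      have h0 : a = 0 := congrFun h 0
      have h1 : b = 0 := congrFun h 1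
      exact hab.elim (fun h => h h0) (fun h => h h1)
    apply h1g ![a, b] w hab0 hw0
    have h2 := congrArg lin hw
    rw [map_sum, map_zero] at h2
    rw [← h2, Fin.sum_univ_two, ← Finset.sum_add_distrib]
    refine Finset.sum_congr rfl fun j _ => ?_
    simp only [map_smul, map_add, MvPolynomial.smul_eq_C_mul, MvPolynomial.algebraMap_eq, map_mul]
    refine Fin.cases ?_ (fun j => ?_) j
    · simp; ring
    · simp; ring
  have hIM : I = MI (Fin.cons cx cu : Fin (m + 1) → Fin N → K) (Fin.cons cy cv) p q := by
    rw [hI, repByMinors, MI]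
    simp only [Fin.cons_zero, Fin.cons_succ]
    apply le_antisymm
    · rw [Ideal.span_le]
      rintro _ ⟨j, rfl⟩
      rw [SetLike.mem_coe]
      dsimp only
      refine Fin.cases ?_ (fun j => Fin.cases ?_ (fun j => ?_) j) j
      · simp only [Fin.cons_zero, mul_zero, sub_zero]
        exact Ideal.mem_sup_left (Ideal.mem_sup_left (Ideal.mem_span_singleton_self _))
      · simp only [Fin.cons_zero, Fin.cons_succ, mul_zero, zero_sub, neg_mem_iff]
        exact Ideal.mem_sup_left (Ideal.mem_sup_right (Ideal.mem_span_singleton_self _))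
      · simp only [Fin.cons_succ]
        exact Ideal.mem_sup_right (Ideal.subset_span ⟨j, rfl⟩)
    · refine sup_le (sup_le ?_ ?_) ?_
      · rw [Ideal.span_singleton_le_iff_mem]
        exact Ideal.subset_span ⟨0, by simp⟩
      · rw [Ideal.span_singleton_le_iff_mem, ← neg_mem_iff]
        exact Ideal.subset_span ⟨Fin.succ 0, by
          simp only [Fin.cons_zero, Fin.cons_succ, mul_zero, zero_sub]⟩
      · rw [Ideal.span_le]
        rintro _ ⟨j, rfl⟩
        exact Ideal.subset_span ⟨j.succ.succ, by simp only [Fin.cons_succ]⟩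
  rw [hIM, show 2 * (m + 2) - 2 = 2 * m + 2 by omega]
  exact projDim_le_of_hasPD _ _ (MI_pd _ _ p q hH)
end

section
/- Let R be a polynomial ring over an algebraically closed field K. Let I be an ideal generated by n ≥ 3 quadrics represented by minors by the 2×(n+1) matrix M = [[x, 0, a_{12}, a_{13}, a_{14}, …, a_{1n}], [y, a_{21}, 0, λa_{13}, a_{24}, …, a_{2n}]], where λ ∈ K is a scalar, all entries are linear forms or zero, and x, y are linearly independent linear forms. Assume additionally that every ideal J of height two generated by n − 1 quadrics in any polynomial ring S over K satisfies pd(S/J) ≤ 2n − 4. Then pd(R/I) ≤ 2n − 2. -/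
open MvPolynomial Filter

universe u

section PdTools
open CategoryTheory

theorem pdLE_iff (R : Type u) [CommRing R] (n : ℕ) :
    ∀ (M : Type u) [AddCommGroup M] [Module R M],
      PdLE R n M ↔ HasProjectiveDimensionLT (ModuleCat.of R M) (n + 1) := by
  induction n with
  | zero =>
    intro M _ _
    rw [zero_add, ← projective_iff_hasProjectiveDimensionLT_one, ← IsProjective.iff_projective]
    rfl
  | succ n ih =>
    intro M _ _
    constructor
    · rintro ⟨F, _, _, hF, f, hf, h⟩
      rw [ih] at h
      have hS := LinearMap.shortExact_shortComplexKer hf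
      have : Projective (ModuleCat.of R F) := by
        rw [← IsProjective.iff_projective]
        exact Module.Projective.of_free
      exact (hS.hasProjectiveDimensionLT_X₃_iff n this).mpr h
    · intro h
      let f : (M →₀ R) →ₗ[R] M := Finsupp.linearCombination R id
      have hf : Function.Surjective f := Finsupp.linearCombination_id_surjective R M
      refine ⟨M →₀ R, inferInstance, inferInstance, inferInstance, f, hf, ?_⟩
      rw [ih]
      have hS := LinearMap.shortExact_shortComplexKer hf
      have : Projective (ModuleCat.of R (M →₀ R)) := by
        rw [← IsProjective.iff_projective]
        exact Module.Projective.of_free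
      exact (hS.hasProjectiveDimensionLT_X₃_iff n this).mp h

theorem pdLE_mono {R : Type u} [CommRing R] {n k : ℕ} (h : n ≤ k) {M : Type u} [AddCommGroup M]
    [Module R M] (hM : PdLE R n M) : PdLE R k M := by
  rw [pdLE_iff] at hM ⊢
  exact hasProjectiveDimensionLT_of_ge _ (n + 1) _ (by omega)

theorem pdLE_equiv {R : Type u} [CommRing R] {n : ℕ} {M M' : Type u} [AddCommGroup M]
    [Module R M] [AddCommGroup M'] [Module R M'] (e : M ≃ₗ[R] M') (hM : PdLE R n M) :
    PdLE R n M' := by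
  rw [pdLE_iff] at hM ⊢
  exact hasProjectiveDimensionLT_of_iso e.toModuleIso _

section SES
variable {R : Type u} [CommRing R] {n : ℕ} {M₁ M₂ M₃ : Type u} [AddCommGroup M₁]
    [Module R M₁] [AddCommGroup M₂] [Module R M₂] [AddCommGroup M₃] [Module R M₃]

theorem ses_aux (f : M₁ →ₗ[R] M₂) (g : M₂ →ₗ[R] M₃) (hf : Function.Injective f)
    (hg : Function.Surjective g) (h : Function.Exact f g) :
    (ShortComplex.mk (ModuleCat.ofHom f) (ModuleCat.ofHom g)
      (by ext x; exact h.apply_apply_eq_zero x)).ShortExact where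
  exact := by
    rw [ShortComplex.ShortExact.moduleCat_exact_iff_function_exact]
    exact h
  mono_f := (ModuleCat.mono_iff_injective _).2 hf
  epi_g := (ModuleCat.epi_iff_surjective _).2 hg

theorem pdLE_two (f : M₁ →ₗ[R] M₂) (g : M₂ →ₗ[R] M₃) (hf : Function.Injective f)
    (hg : Function.Surjective g) (h : Function.Exact f g)
    (h1 : PdLE R n M₁) (h3 : PdLE R n M₃) : PdLE R n M₂ := by
  rw [pdLE_iff] at h1 h3 ⊢
  exact (ses_aux f g hf hg h).hasProjectiveDimensionLT_X₂ _ h1 h3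

theorem pdLE_three (f : M₁ →ₗ[R] M₂) (g : M₂ →ₗ[R] M₃) (hf : Function.Injective f)
    (hg : Function.Surjective g) (h : Function.Exact f g)
    (h1 : PdLE R n M₁) (h2 : PdLE R n M₂) : PdLE R (n + 1) M₃ := by
  have h2 := pdLE_mono (Nat.le_succ n) h2
  rw [pdLE_iff] at h1 h2 ⊢
  exact (ses_aux f g hf hg h).hasProjectiveDimensionLT_X₃ _ h1 h2
end SES

end PdTools

theorem projDim_le_iff {R : Type u} [CommRing R] {M : Type u} [AddCommGroup M] [Module R M]
    (n : ℕ) : projDim R M ≤ n ↔ PdLE R n M := by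
  constructor
  · intro h
    have hne : ((fun n : ℕ => (n : ℕ∞)) '' {n : ℕ | PdLE R n M}).Nonempty := by
      by_contra hc
      rw [Set.not_nonempty_iff_eq_empty] at hc
      rw [projDim, hc, sInf_empty] at h
      simp at h
    obtain ⟨k, hk, hk'⟩ := csInf_mem hne
    have : (k : ℕ∞) ≤ n := by
      rw [projDim] at h
      exact hk'.le.trans h
    exact pdLE_mono (by exact_mod_cast this) hk
  · intro h
    exact sInf_le ⟨n, h, rfl⟩

open TensorProduct in
theorem pdLE_baseChange {A R : Type u} [CommRing A] [CommRing R] [Algebra A R] [Module.Flat A R]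
    (n : ℕ) : ∀ (M : Type u) [AddCommGroup M] [Module A M], PdLE A n M → PdLE R n (R ⊗[A] M) := by
  induction n with
  | zero =>
    intro M _ _ h
    have : Module.Projective A M := h
    exact (inferInstance : Module.Projective R (R ⊗[A] M))
  | succ n ih =>
    rintro M _ _ ⟨F, _, _, hF, f, hf, h⟩
    refine ⟨R ⊗[A] F, inferInstance, inferInstance, inferInstance, f.baseChange R, ?_, ?_⟩
    · exact LinearMap.lTensor_surjective R hf
    · exact pdLE_equiv (LinearMap.tensorKerEquiv R R f) (ih _ h)

section Syz
open Polynomial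

theorem pdLE_semi {S R : Type u} [CommRing S] [CommRing R] (e : S ≃+* R) (n : ℕ)
    (M : Type u) [AddCommGroup M] [Module R M]
    (h : @PdLE S _ n M _ (Module.compHom M (e : S →+* R))) : PdLE R n M := by
  let : Module S M := Module.compHom M (e : S →+* R)
  have := RingHomInvPair.of_ringEquiv e
  have := RingHomInvPair.of_ringEquiv_symm e
  rw [pdLE_iff] at h ⊢
  let e' : ModuleCat.of S M ≃ₛₗ[RingHomClass.toRingHom e] ModuleCat.of R M :=
    { AddEquiv.refl M with
      map_smul' := fun s m => rfl }
  exact ModuleCat.hasProjectiveDimensionLE_of_semiLinearEquiv e e' n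

variable {A : Type u} [CommRing A]

open TensorProduct in
theorem pdLE_poly (n : ℕ) (M : Type u) [AddCommGroup M] [Module A[X] M]
    (h : @PdLE A _ n M _ (Module.compHom M (Polynomial.C : A →+* A[X]))) : PdLE A[X] (n + 1) M := by
  let : Module A M := Module.compHom M (Polynomial.C : A →+* A[X])
  have : IsScalarTower A A[X] M := ⟨fun a p m => by
    change (a • p) • m = (C a : A[X]) • (p • m)
    rw [smul_smul, Polynomial.smul_eq_C_mul]⟩
  let N := A[X] ⊗[A] M
  have hN : PdLE A[X] n N := pdLE_baseChange n M h
  let XM : M →ₗ[A] M := (LinearMap.lsmul A[X] M (Polynomial.X : A[X])).restrictScalars A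
  let δ : N →ₗ[A[X]] N := LinearMap.lsmul A[X] N (Polynomial.X : A[X]) - XM.baseChange A[X]
  let ε : N →ₗ[A[X]] M := TensorProduct.AlgebraTensorModule.lift
    ((LinearMap.lsmul A[X] M).restrictScalars₁₂ A[X] A)
  have hδt : ∀ p m, δ (p ⊗ₜ m) = ((Polynomial.X : A[X]) * p) ⊗ₜ m - p ⊗ₜ ((Polynomial.X : A[X]) • m) := fun p m => rfl
  have hεt : ∀ p m, ε (p ⊗ₜ m) = p • m := fun p m => rfl
  have key : ∀ z : N, z - 1 ⊗ₜ ε z ∈ LinearMap.range δ := by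
    intro z
    induction z using TensorProduct.induction_on with
    | zero => simp
    | add a b ha hb =>
      have := add_mem ha hb
      rw [map_add, TensorProduct.tmul_add]
      convert this using 1
      abel
    | tmul p m =>
      rw [hεt]
      induction p using Polynomial.induction_on' generalizing m with
      | add p q hp hq =>
        have := add_mem (hp m) (hq m)
        rw [add_smul, TensorProduct.tmul_add, TensorProduct.add_tmul]
        convert this using 1
        abel
      | monomial k a =>
        induction k generalizing m with
        | zero =>
          have : ((Polynomial.monomial 0 a : A[X])) = a • (1 : A[X]) := by
            rw [Polynomial.smul_eq_C_mul, mul_one]; rfl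
          rw [this, TensorProduct.smul_tmul, smul_assoc, one_smul, sub_self]
          exact zero_mem _
        | succ k ih =>
          have e1 : (Polynomial.monomial (k+1) a : A[X]) = Polynomial.X * Polynomial.monomial k a := by
            rw [Polynomial.X_mul_monomial]
          have h2 := ih ((Polynomial.X : A[X]) • m)
          have h3 : δ (Polynomial.monomial k a ⊗ₜ m) ∈ LinearMap.range δ := ⟨_, rfl⟩
          have := add_mem h2 h3
          rw [hδt] at this
          rw [e1]
          convert this using 1
          rw [smul_smul, mul_comm (Polynomial.monomial k a) Polynomial.X]
          abel
  refine pdLE_three δ ε ?_ ?_ ?_ hN hN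
  · let E := PolynomialModule.polynomialTensorProductLEquivPolynomialModule A M
    have hEt : ∀ (p : A[X]) (m : M) (k : ℕ), (E (p ⊗ₜ m)).coeff k = p.coeff k • m := by
      intro p m k
      have : E (p ⊗ₜ m) = p • PolynomialModule.single A 0 m := rfl
      rw [this, PolynomialModule.smul_single_apply]
      simp
    have hrec : ∀ (z : N) (k : ℕ),
        (E (δ z)).coeff (k + 1) = (E z).coeff k - (Polynomial.X : A[X]) • (E z).coeff (k + 1) := by
      intro z k
      induction z using TensorProduct.induction_on with
      | zero => simp
      | add a b ha hb =>
        simp only [map_add, PolynomialModule.coeff_add, Finsupp.add_apply, ha, hb, smul_add]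
        abel
      | tmul p m =>
        rw [hδt, map_sub]
        have : ∀ a b : PolynomialModule A M, (a - b).coeff (k+1) = a.coeff (k+1) - b.coeff (k+1) :=
          fun a b => rfl
        rw [this, hEt, hEt, hEt, hEt, Polynomial.coeff_X_mul, smul_comm]
    rw [injective_iff_map_eq_zero]
    intro z hz
    have h1 : ∀ k, (E z).coeff k = (Polynomial.X : A[X]) • (E z).coeff (k + 1) := by
      intro k
      have := hrec z k
      rw [hz, map_zero] at this
      exact (sub_eq_zero.mp this.symm)
    have h2 : ∀ j k, (E z).coeff k = ((Polynomial.X : A[X]) ^ j) • (E z).coeff (k + j) := by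
      intro j
      induction j with
      | zero => simp
      | succ j ih =>
        intro k
        rw [ih k, h1 (k + j), smul_smul, ← pow_succ, add_assoc]
    apply E.injective
    rw [map_zero]
    apply PolynomialModule.coeff_injective
    ext k
    obtain ⟨B, hB⟩ := (E z).coeff.support.bddAbove
    have : (E z).coeff (k + (B + 1)) = 0 := by
      by_contra hc
      have := hB (Finset.mem_coe.2 (Finsupp.mem_support_iff.2 hc))
      omega
    rw [h2 (B + 1) k, this, smul_zero]
    rfl
  · intro m
    exact ⟨1 ⊗ₜ m, by rw [hεt, one_smul]⟩
  · intro z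
    constructor
    · intro hz
      have := key z
      rw [hz, TensorProduct.tmul_zero, sub_zero] at this
      exact this
    · rintro ⟨w, rfl⟩
      induction w using TensorProduct.induction_on with
      | zero => simp
      | add a b ha hb => rw [map_add, map_add, ha, hb, add_zero]
      | tmul p m =>
        rw [hδt, map_sub, hεt, hεt, smul_smul, mul_comm, sub_self]

end Syz

theorem pdLE_mvPoly (K : Type u) [Field K] (d : ℕ) :
    ∀ (M : Type u) [AddCommGroup M] [Module (MvPolynomial (Fin d) K) M],
      PdLE (MvPolynomial (Fin d) K) d M := by
  induction d with
  | zero =>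
    intro M _ _
    refine pdLE_semi (MvPolynomial.isEmptyAlgEquiv K (Fin 0)).symm.toRingEquiv 0 M ?_
    let : Module K M :=
      Module.compHom M ((MvPolynomial.isEmptyAlgEquiv K (Fin 0)).symm.toRingEquiv :
        K →+* MvPolynomial (Fin 0) K)
    exact (inferInstance : Module.Projective K M)
  | succ d ih =>
    intro M _ _
    refine pdLE_semi (MvPolynomial.finSuccEquiv K d).symm.toRingEquiv (d + 1) M ?_
    let : Module (Polynomial (MvPolynomial (Fin d) K)) M :=
      Module.compHom M ((MvPolynomial.finSuccEquiv K d).symm.toRingEquiv :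
        Polynomial (MvPolynomial (Fin d) K) →+* MvPolynomial (Fin (d + 1)) K)
    exact pdLE_poly d M (@ih M _ (Module.compHom M Polynomial.C))

theorem exists_coord {K : Type u} [Field K] {N : ℕ} {ι : Type}
    (l : ι → MvPolynomial (Fin N) K) (hl : LinearIndependent K l)
    (h1 : ∀ i, (l i).IsHomogeneous 1) :
    ∃ (T : Type u) (e : MvPolynomial (ι ⊕ T) K ≃ₐ[K] MvPolynomial (Fin N) K),
      ∀ i, e (X (Sum.inl i)) = l i := by
  let V := homogeneousSubmodule (Fin N) K 1
  let l' : ι → V := fun i => ⟨l i, h1 i⟩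
  have hl' : LinearIndependent K l' := LinearIndependent.of_comp V.subtype hl
  let b := Module.Basis.sumExtend hl'
  let κ := ι ⊕ Module.Basis.sumExtendIndex hl'
  have hb : ∀ i, b (Sum.inl i) = l' i := by
    intro i
    simp [b, Module.Basis.sumExtend]
    rfl
  let Xv : Fin N → V := fun j => ⟨X j, isHomogeneous_X K j⟩
  let L : V →ₗ[K] MvPolynomial κ K := b.constr K (fun k => X k)
  have hL : ∀ k, L (b k) = X k := fun k => b.constr_basis K _ k
  let f : MvPolynomial κ K →ₐ[K] MvPolynomial (Fin N) K := aeval (fun k => (b k : MvPolynomial (Fin N) K))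
  let g : MvPolynomial (Fin N) K →ₐ[K] MvPolynomial κ K := aeval (fun j => L (Xv j))
  have hfL : ∀ v : V, f (L v) = v := by
    intro v
    have : f.toLinearMap ∘ₗ L = V.subtype := by
      apply b.ext
      intro k
      simp [hL, f]
    exact LinearMap.congr_fun this v
  have hgv : ∀ v : V, g v = L v := by
    rintro ⟨v, hv⟩
    have hv' := hv
    rw [show V = homogeneousSubmodule (Fin N) K 1 from rfl,
      homogeneousSubmodule_one_eq_span_X] at hv'
    induction hv' using Submodule.span_induction with
    | mem x hx =>
      obtain ⟨j, rfl⟩ := hx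
      simp [g, Xv]
    | zero => 
      rw [map_zero]; exact (map_zero L).symm
    | add x y hx hy ihx ihy =>
      have hx1 : x ∈ V := by
        rw [show V = homogeneousSubmodule (Fin N) K 1 from rfl,
          homogeneousSubmodule_one_eq_span_X]; exact hx
      have hy1 : y ∈ V := by
        rw [show V = homogeneousSubmodule (Fin N) K 1 from rfl,
          homogeneousSubmodule_one_eq_span_X]; exact hy
      have : (⟨x + y, hv⟩ : V) = ⟨x, hx1⟩ + ⟨y, hy1⟩ := rfl
      rw [this, map_add, ← ihx, ← ihy, ← map_add]; rfl
    | smul a x hx ihx =>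
      have hx1 : x ∈ V := by
        rw [show V = homogeneousSubmodule (Fin N) K 1 from rfl,
          homogeneousSubmodule_one_eq_span_X]; exact hx
      have : (⟨a • x, hv⟩ : V) = a • ⟨x, hx1⟩ := rfl
      rw [this, map_smul, ← ihx, ← map_smul]; rfl
  refine ⟨Module.Basis.sumExtendIndex hl', AlgEquiv.ofAlgHom f g ?_ ?_, ?_⟩
  · apply MvPolynomial.algHom_ext
    intro j
    simp [g, hfL, Xv]
  · apply MvPolynomial.algHom_ext
    intro k
    simp [f, hgv, hL]
  · intro i
    simp [f, hb, l']

/-- Ideals generated by polynomials in few linear forms have small projective dimension. -/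
theorem pdLE_of_forms {K : Type u} [Field K] {N d : ℕ} {ι γ : Type} [Finite ι]
    (l : ι → MvPolynomial (Fin N) K) (h1 : ∀ i, (l i).IsHomogeneous 1)
    (hd : Module.finrank K (Submodule.span K (Set.range l)) ≤ d)
    (g : γ → MvPolynomial (Fin N) K) (hg : ∀ i, g i ∈ Algebra.adjoin K (Set.range l)) :
    PdLE (MvPolynomial (Fin N) K) d (MvPolynomial (Fin N) K ⧸ Ideal.span (Set.range g)) := by
  refine pdLE_mono hd ?_
  set W := Submodule.span K (Set.range l) with hW
  have : Module.Finite K W := Module.Finite.span_of_finite K (Set.finite_range l)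
  set d' := Module.finrank K W
  let b : Module.Basis (Fin d') K W := Module.finBasis K W
  have hWV : W ≤ homogeneousSubmodule (Fin N) K 1 := by
    rw [hW, Submodule.span_le]
    rintro _ ⟨i, rfl⟩
    exact h1 i
  obtain ⟨T, e, he⟩ := exists_coord (fun i => (b i : MvPolynomial (Fin N) K))
    (b.linearIndependent.map' W.subtype (by simp)) (fun i => hWV (b i).2)
  let A := MvPolynomial (Fin d') K
  let φ : A →ₐ[K] MvPolynomial (Fin N) K := e.toAlgHom.comp (rename Sum.inl)
  have hφb : ∀ i, φ (X i) = b i := by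
    intro i
    change e (rename Sum.inl (X i : MvPolynomial (Fin d') K)) = _
    rw [rename_X, he]
  have hWφ : ∀ w ∈ W, w ∈ φ.range := by
    intro w hw
    have h2 := b.sum_repr ⟨w, hw⟩
    have h3 := congrArg W.subtype h2
    rw [map_sum] at h3
    refine ⟨∑ i, b.repr ⟨w, hw⟩ i • X i, ?_⟩
    simp only [AlgHom.toRingHom_eq_coe, RingHom.coe_coe, map_sum, map_smul, hφb]
    simpa using h3
  have hgφ : ∀ i, ∃ p, φ p = g i := by
    intro i
    have : Algebra.adjoin K (Set.range l) ≤ φ.range := by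
      rw [Algebra.adjoin_le_iff]
      rintro _ ⟨j, rfl⟩
      exact hWφ _ (Submodule.subset_span ⟨j, rfl⟩)
    exact this (hg i)
  choose p hp using hgφ
  have hflat : (φ : A →+* MvPolynomial (Fin N) K).Flat := by
    have e1 : (φ : A →+* MvPolynomial (Fin N) K) =
        ((e.toRingEquiv : MvPolynomial (Fin d' ⊕ T) K →+* MvPolynomial (Fin N) K)).comp
          (((sumAlgEquiv K T (Fin d')).symm.toRingEquiv : MvPolynomial T A →+* _ ) |>.comp
            (C : A →+* MvPolynomial T A) |> fun h =>
              ((renameEquiv K (Equiv.sumComm T (Fin d'))).toRingEquiv :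
                MvPolynomial (T ⊕ Fin d') K →+* MvPolynomial (Fin d' ⊕ T) K).comp h) := by
      apply MvPolynomial.ringHom_ext
      · intro r
        have : (sumAlgEquiv K T (Fin d')).symm (C (C r)) = C r := sumRingEquiv_symm_C_C K T (Fin d') r
        simp [φ, A, this]
        exact (e.commutes r).symm
      · intro i
        have : (sumAlgEquiv K T (Fin d')).symm (C (X i)) = X (Sum.inr i) :=
          sumRingEquiv_symm_C_X K T (Fin d') i
        simp [φ, A, this]
    rw [e1]
    refine RingHom.Flat.comp (RingHom.Flat.comp (RingHom.Flat.comp ?_ ?_) ?_) ?_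
    · exact RingHom.flat_algebraMap_iff.2 (inferInstance : Module.Flat A (MvPolynomial T A))
    · exact RingHom.Flat.of_bijective (RingEquiv.bijective _)
    · exact RingHom.Flat.of_bijective (RingEquiv.bijective _)
    · exact RingHom.Flat.of_bijective (RingEquiv.bijective _)
  let : Algebra A (MvPolynomial (Fin N) K) := (φ : A →+* MvPolynomial (Fin N) K).toAlgebra
  have : Module.Flat A (MvPolynomial (Fin N) K) := hflat
  have h := pdLE_baseChange (R := MvPolynomial (Fin N) K) d' _
    (pdLE_mvPoly K d' (A ⧸ Ideal.span (Set.range p)))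
  have h2 := pdLE_equiv
    (Algebra.TensorProduct.quotIdealMapEquivTensorQuot (MvPolynomial (Fin N) K)
      (Ideal.span (Set.range p))).toLinearEquiv.symm h
  have h3 : (Ideal.span (Set.range p)).map (algebraMap A (MvPolynomial (Fin N) K)) =
      Ideal.span (Set.range g) := by
    rw [Ideal.map_span, ← Set.range_comp]
    congr 2
    ext1 i
    exact hp i
  rwa [h3] at h2

section Colon
variable {R : Type u} [CommRing R] {n : ℕ}

theorem colon_seq (A B : Ideal R) (c : R) (h : ∀ f, c * f ∈ B ↔ f ∈ A) :
    ∃ (f : (R ⧸ A) →ₗ[R] (R ⧸ B)) (g : (R ⧸ B) →ₗ[R] (R ⧸ (B ⊔ Ideal.span {c}))),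
      Function.Injective f ∧ Function.Surjective g ∧ Function.Exact f g := by
  let f : (R ⧸ A) →ₗ[R] (R ⧸ B) :=
    Submodule.mapQ A B (LinearMap.lsmul R R c) (fun x hx => (h x).2 hx)
  let g : (R ⧸ B) →ₗ[R] (R ⧸ (B ⊔ Ideal.span {c})) :=
    Submodule.mapQ B (B ⊔ Ideal.span {c}) LinearMap.id (fun x hx => Ideal.mem_sup_left hx)
  have hf : ∀ x : R, f (Submodule.Quotient.mk x) = Submodule.Quotient.mk (c * x) := fun x => rfl
  have hg : ∀ x : R, g (Submodule.Quotient.mk x) = Submodule.Quotient.mk x := fun x => rfl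
  refine ⟨f, g, ?_, ?_, ?_⟩
  · rw [injective_iff_map_eq_zero]
    intro z
    obtain ⟨x, rfl⟩ := Submodule.Quotient.mk_surjective _ z
    rw [hf, Submodule.Quotient.mk_eq_zero, Submodule.Quotient.mk_eq_zero]
    exact (h x).1
  · intro z
    obtain ⟨x, rfl⟩ := Submodule.Quotient.mk_surjective _ z
    exact ⟨Submodule.Quotient.mk x, rfl⟩
  · intro z
    obtain ⟨x, rfl⟩ := Submodule.Quotient.mk_surjective _ z
    rw [hg, Submodule.Quotient.mk_eq_zero]
    constructor
    · intro hx
      obtain ⟨b, hb, y, hy, rfl⟩ := Submodule.mem_sup.1 hx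
      obtain ⟨t, rfl⟩ := Ideal.mem_span_singleton'.1 hy
      refine ⟨Submodule.Quotient.mk t, ?_⟩
      rw [hf, Submodule.Quotient.eq]
      have : c * t - (b + t * c) = -b := by ring
      rw [this]
      exact neg_mem hb
    · rintro ⟨w, hw⟩
      obtain ⟨t, rfl⟩ := Submodule.Quotient.mk_surjective _ w
      rw [hf, Submodule.Quotient.eq] at hw
      have : x = c * t - (c * t - x) := by ring
      rw [this]
      exact sub_mem (Ideal.mem_sup_right (Ideal.mul_mem_right _ _ (Ideal.mem_span_singleton_self c)))
        (Ideal.mem_sup_left hw)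

theorem pdLE_split (J : Ideal R) (c s : R) (hc : ∀ f, c * f ∈ J → f ∈ J)
    (h1 : PdLE R n (R ⧸ J)) (h2 : PdLE R (n + 1) (R ⧸ (J ⊔ Ideal.span {s}))) :
    PdLE R (n + 1) (R ⧸ (J ⊔ Ideal.span {s * c})) := by
  have h3 : PdLE R (n + 1) (R ⧸ (J ⊔ Ideal.span {c})) := by
    obtain ⟨f, g, hf, hg, hfg⟩ := colon_seq J J c (fun f => ⟨hc f, fun h => Ideal.mul_mem_left _ _ h⟩)
    exact pdLE_three f g hf hg hfg h1 h1
  obtain ⟨f, g, hf, hg, hfg⟩ := colon_seq (J ⊔ Ideal.span {s}) (J ⊔ Ideal.span {s * c}) c (by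
    intro f
    constructor
    · intro h
      obtain ⟨b, hb, y, hy, hby⟩ := Submodule.mem_sup.1 h
      obtain ⟨t, rfl⟩ := Ideal.mem_span_singleton'.1 hy
      have : c * (f - t * s) = b := by linear_combination -hby
      have h4 := hc (f - t * s) (this ▸ hb)
      have h5 : f = (f - t * s) + t * s := by ring
      rw [h5]
      exact add_mem (Ideal.mem_sup_left h4)
        (Ideal.mem_sup_right (Ideal.mul_mem_left _ _ (Ideal.mem_span_singleton_self s)))
    · intro h
      obtain ⟨b, hb, y, hy, rfl⟩ := Submodule.mem_sup.1 h
      obtain ⟨t, rfl⟩ := Ideal.mem_span_singleton'.1 hy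
      have : c * (b + t * s) = c * b + t * (s * c) := by ring
      rw [this]
      exact add_mem (Ideal.mem_sup_left (Ideal.mul_mem_left _ _ hb))
        (Ideal.mem_sup_right (Ideal.mul_mem_left _ _ (Ideal.mem_span_singleton_self _))))
  have h6 : J ⊔ Ideal.span {s * c} ⊔ Ideal.span {c} = J ⊔ Ideal.span {c} := by
    rw [sup_assoc]
    congr 1
    rw [sup_eq_right, Ideal.span_singleton_le_span_singleton]
    exact dvd_mul_left c s
  rw [← h6] at h3
  exact pdLE_two f g hf hg hfg h2 h3
end Colon

theorem mem_iff_map_equiv {R S : Type*} [CommRing R] [CommRing S] (e : R ≃+* S) (J : Ideal R)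
    (q : R) : q ∈ J ↔ e q ∈ J.map (e : R →+* S) := by
  constructor
  · exact fun h => Ideal.mem_map_of_mem (e : R →+* S) h
  · intro h
    have := Ideal.comap_map_of_bijective (e : R →+* S) e.bijective (I := J)
    rw [← this]
    exact h

theorem nzd_of_forms {K : Type u} [Field K] {N : ℕ} {κ γ : Type}
    (l : Option κ → MvPolynomial (Fin N) K) (hl : LinearIndependent K l)
    (h1 : ∀ i, (l i).IsHomogeneous 1)
    (g : γ → MvPolynomial (Fin N) K)
    (hg : ∀ i, g i ∈ Algebra.adjoin K (Set.range (fun k => l (some k))))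
    (f : MvPolynomial (Fin N) K) (hf : l none * f ∈ Ideal.span (Set.range g)) :
    f ∈ Ideal.span (Set.range g) := by
  obtain ⟨T, e, he⟩ := exists_coord l hl h1
  let σ : Option κ ⊕ T ≃ Option (κ ⊕ T) :=
    { toFun := Sum.elim (fun o => o.map Sum.inl) (fun t => some (Sum.inr t))
      invFun := fun o => o.elim (Sum.inl none) (Sum.elim (fun k => Sum.inl (some k)) Sum.inr)
      left_inv := by rintro ((_ | _) | _) <;> rfl
      right_inv := by rintro (_ | (_ | _)) <;> rfl }
  let B := MvPolynomial (κ ⊕ T) K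
  let ψ : MvPolynomial (Fin N) K ≃ₐ[K] Polynomial (MvPolynomial (κ ⊕ T) K) :=
    e.symm.trans ((renameEquiv K σ).trans (optionEquivLeft K (κ ⊕ T)))
  have he' : ∀ i, e.symm (l i) = X (Sum.inl i) := fun i => by
    rw [AlgEquiv.symm_apply_eq, he]
  have hψn : ψ (l none) = Polynomial.X := by
    simp [ψ, he', σ]
  have hψs : ∀ k, ψ (l (some k)) = Polynomial.C (X (Sum.inl k)) := by
    intro k
    simp [ψ, he', σ]
  have hψg : ∀ i, ∃ p, Polynomial.C p = ψ (g i) := by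
    intro i
    have : Algebra.adjoin K (Set.range (fun k => l (some k))) ≤
        ((Polynomial.CAlgHom (R := K) (A := MvPolynomial (κ ⊕ T) K)).range).comap ψ.toAlgHom := by
      rw [Algebra.adjoin_le_iff]
      rintro _ ⟨k, rfl⟩
      exact ⟨X (Sum.inl k), (hψs k).symm⟩
    obtain ⟨p, hp⟩ := this (hg i)
    exact ⟨p, hp⟩
  choose p hp using hψg
  have hmap : (Ideal.span (Set.range g)).map (ψ.toRingEquiv : MvPolynomial (Fin N) K →+* _) =
      (Ideal.span (Set.range p)).map Polynomial.C := by
    rw [Ideal.map_span, Ideal.map_span, ← Set.range_comp, ← Set.range_comp]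
    congr 2
    ext1 i
    exact (hp i).symm
  have hmem : ∀ q, q ∈ Ideal.span (Set.range g) ↔
      ψ q ∈ (Ideal.span (Set.range p)).map Polynomial.C := by
    intro q
    rw [← hmap]
    exact mem_iff_map_equiv ψ.toRingEquiv _ q
  rw [hmem] at hf ⊢
  rw [map_mul, hψn, Ideal.mem_map_C_iff] at hf
  rw [Ideal.mem_map_C_iff]
  intro k
  have := hf (k + 1)
  rwa [Polynomial.coeff_X_mul] at this

theorem two_le_height {K : Type u} [Field K] {N : ℕ} {ι : Type}
    (l : ι → MvPolynomial (Fin N) K) (hl : LinearIndependent K l)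
    (h1 : ∀ i, (l i).IsHomogeneous 1) (i j : ι) (hij : i ≠ j)
    (P : PrimeSpectrum (MvPolynomial (Fin N) K)) (hi : l i ∈ P.asIdeal) (hj : l j ∈ P.asIdeal) :
    2 ≤ Order.height P := by
  obtain ⟨T, e, he⟩ := exists_coord l hl h1
  have hp : Prime (l i) := by
    rw [← he i]
    exact (MulEquiv.prime_iff e).2 X_prime
  have hnd : ¬ l i ∣ l j := by
    rw [← he i, ← he j, map_dvd_iff e]
    intro h
    rw [X_dvd_X] at h
    aesop
  let Q : PrimeSpectrum (MvPolynomial (Fin N) K) :=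
    ⟨Ideal.span {l i}, (Ideal.span_singleton_prime hp.ne_zero).2 hp⟩
  let Z : PrimeSpectrum (MvPolynomial (Fin N) K) := ⟨⊥, Ideal.isPrime_bot⟩
  have hZQ : Z < Q := by
    rw [← PrimeSpectrum.asIdeal_lt_asIdeal]
    refine lt_of_le_of_ne bot_le ?_
    intro h
    have : l i ∈ (⊥ : Ideal (MvPolynomial (Fin N) K)) := by
      rw [show (⊥ : Ideal (MvPolynomial (Fin N) K)) = Ideal.span {l i} from h]
      exact Ideal.mem_span_singleton_self _
    exact hp.ne_zero this
  have hQP : Q < P := by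
    rw [← PrimeSpectrum.asIdeal_lt_asIdeal]
    refine lt_of_le_of_ne ?_ ?_
    · exact (Ideal.span_singleton_le_iff_mem _).2 hi
    · intro h
      rw [← h] at hj
      exact hnd (Ideal.mem_span_singleton.1 hj)
  have a1 := Order.height_add_one_le hZQ
  have a2 := Order.height_add_one_le hQP
  calc (2 : ℕ∞) = 0 + 1 + 1 := by norm_num
    _ ≤ Order.height Z + 1 + 1 := by gcongr; exact bot_le
    _ ≤ Order.height Q + 1 := by gcongr
    _ ≤ _ := a2

theorem ht_two {K : Type u} [Field K] {N : ℕ} {ι : Type}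
    (l : ι → MvPolynomial (Fin N) K) (hl : LinearIndependent K l)
    (h1 : ∀ i, (l i).IsHomogeneous 1) (i1 i2 i3 i4 : ι) (h12 : i1 ≠ i2) (h14 : i1 ≠ i4)
    (h32 : i3 ≠ i2) (h34 : i3 ≠ i4) (J : Ideal (MvPolynomial (Fin N) K))
    (hJ1 : l i1 * l i3 ∈ J) (hJ2 : l i2 * l i4 ∈ J) (hJ : J ≤ Ideal.span {l i1, l i2}) :
    idealHeight J = 2 := by
  apply le_antisymm
  · have hne : Ideal.span {l i1, l i2} ≠ ⊤ := by
      intro h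
      have h2 : Ideal.span {l i1, l i2} ≤
          RingHom.ker (constantCoeff : MvPolynomial (Fin N) K →+* K) := by
        rw [Ideal.span_le]
        have : ∀ i, constantCoeff (l i) = 0 := by
          intro i
          rw [constantCoeff_eq]
          exact (h1 i).coeff_eq_zero (by simp)
        rintro _ (rfl | rfl) <;> exact this _
      rw [h, top_le_iff] at h2
      exact RingHom.ker_ne_top _ h2
    obtain ⟨P, hP⟩ := Ideal.nonempty_minimalPrimes hne
    have hPp : P.IsPrime := hP.1.1
    have h3 := Ideal.height_le_card_of_mem_minimalPrimes_span (Set.toFinite _) hP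
    have h4 : Set.ncard {l i1, l i2} ≤ 2 := by
      have := Set.ncard_insert_le (l i1) {l i2}
      rw [Set.ncard_singleton] at this
      exact this
    have h5 : P.height ≤ 2 := h3.trans (by exact_mod_cast h4)
    have h6 := PrimeSpectrum.height_eq_orderHeight (⟨P, hPp⟩ : PrimeSpectrum _)
    exact (iInf₂_le (⟨P, hPp⟩ : PrimeSpectrum _) (hJ.trans hP.1.2)).trans (h6 ▸ h5)
  · refine le_iInf₂ fun P hP => ?_
    have hP : J ≤ P.asIdeal := hP
    rcases P.2.mem_or_mem (hP hJ1) with a | a <;> rcases P.2.mem_or_mem (hP hJ2) with b | b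
    · exact two_le_height l hl h1 _ _ h12 P a b
    · exact two_le_height l hl h1 _ _ h14 P a b
    · exact two_le_height l hl h1 _ _ h32 P a b
    · exact two_le_height l hl h1 _ _ h34 P a b


theorem span_cons_sup {A : Type*} [CommRing A] {k : ℕ} (t : A) (g : Fin k → A) :
    Ideal.span (Set.range g) ⊔ Ideal.span {t} =
      Ideal.span (Set.range (Fin.cons t g : Fin (k + 1) → A)) := by
  rw [Fin.range_cons, Ideal.span_insert, sup_comm]

/-- with `n = m + 3 ≥ 3`, if `I` is generated by `n` quadrics represented
by minors by `M = [[x, 0, a₁₂, a₁₃, a₁₄, …, a₁ₙ], [y, a₂₁, 0, λa₁₃, a₂₄, …, a₂ₙ]]` with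
`λ ∈ K` a scalar, and if every height two ideal generated by `n - 1` quadrics in any
polynomial ring over `K` has projective dimension at most `2n - 4`, then
`pd(R/I) ≤ 2n - 2`. -/
theorem stmt12 (K : Type u) [Field K] [IsAlgClosed K] (N m : ℕ)
    (x y a₁₂ a₁₃ a₂₁ : MvPolynomial (Fin N) K) (lam : K)
    (hx : x.IsHomogeneous 1) (hy : y.IsHomogeneous 1)
    (ha₁₂ : a₁₂.IsHomogeneous 1) (ha₁₃ : a₁₃.IsHomogeneous 1)
    (ha₂₁ : a₂₁.IsHomogeneous 1)
    (hxy : LinearIndependent K ![x, y])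
    (u v : Fin m → MvPolynomial (Fin N) K)
    (hu : ∀ j, (u j).IsHomogeneous 1) (hv : ∀ j, (v j).IsHomogeneous 1)
    (I : Ideal (MvPolynomial (Fin N) K))
    (hI : I = repByMinors x y
      (Fin.cons 0 (Fin.cons a₁₂ (Fin.cons a₁₃ u)))
      (Fin.cons a₂₁ (Fin.cons 0 (Fin.cons (algebraMap K (MvPolynomial (Fin N) K) lam * a₁₃) v))))
    (ih : ∀ (N' : ℕ) (J : Ideal (MvPolynomial (Fin N') K))
        (g : Fin (m + 2) → MvPolynomial (Fin N') K),
      (∀ i, (g i).IsHomogeneous 2) → J = Ideal.span (Set.range g) →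
      idealHeight J = 2 →
      projDim (MvPolynomial (Fin N') K) (MvPolynomial (Fin N') K ⧸ J) ≤
        ((2 * (m + 3) - 4 : ℕ) : ℕ∞)) :
    projDim (MvPolynomial (Fin N) K) (MvPolynomial (Fin N) K ⧸ I) ≤ ((2 * (m + 3) - 2 : ℕ) : ℕ∞) := by
  set c := a₁₃ with hc
  let l : Option (Fin 4 ⊕ (Fin m ⊕ Fin m)) → MvPolynomial (Fin N) K := fun o =>
    o.elim c (Sum.elim ![x, y, a₁₂, a₂₁] (Sum.elim u v))
  have h1 : ∀ i, (l i).IsHomogeneous 1 := by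
    rintro (_ | k | j | j)
    · exact ha₁₃
    · fin_cases k
      · exact hx
      · exact hy
      · exact ha₁₂
      · exact ha₂₁
    · exact hu j
    · exact hv j
  let s : MvPolynomial (Fin N) K := algebraMap K (MvPolynomial (Fin N) K) lam * x - y
  let g : Fin (m + 2) → MvPolynomial (Fin N) K :=
    Fin.cons (x * a₂₁) (Fin.cons (-(y * a₁₂)) (fun j => x * v j - y * u j))
  let ls : (Fin 4 ⊕ (Fin m ⊕ Fin m)) → MvPolynomial (Fin N) K := fun k => l (some k)
  have mem : ∀ k, ls k ∈ Algebra.adjoin K (Set.range ls) :=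
    fun k => Algebra.subset_adjoin ⟨k, rfl⟩
  have mx : x ∈ Algebra.adjoin K (Set.range ls) := mem (Sum.inl 0)
  have my : y ∈ Algebra.adjoin K (Set.range ls) := mem (Sum.inl 1)
  have m12 : a₁₂ ∈ Algebra.adjoin K (Set.range ls) := mem (Sum.inl 2)
  have m21 : a₂₁ ∈ Algebra.adjoin K (Set.range ls) := mem (Sum.inl 3)
  have mu : ∀ j, u j ∈ Algebra.adjoin K (Set.range ls) := fun j => mem (Sum.inr (Sum.inl j))
  have mv : ∀ j, v j ∈ Algebra.adjoin K (Set.range ls) := fun j => mem (Sum.inr (Sum.inr j))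
  have hg : ∀ i, g i ∈ Algebra.adjoin K (Set.range ls) := by
    intro i
    refine Fin.cases ?_ (fun i => Fin.cases ?_ (fun j => ?_) i) i
    · exact mul_mem mx m21
    · exact neg_mem (mul_mem my m12)
    · exact sub_mem (mul_mem mx (mv j)) (mul_mem my (mu j))
  have hs : s ∈ Algebra.adjoin K (Set.range ls) :=
    sub_mem (mul_mem (Subalgebra.algebraMap_mem _ _) mx) my
  have hIJ : I = Ideal.span (Set.range g) ⊔ Ideal.span {s * c} := by
    rw [hI, repByMinors, ← Ideal.span_union]
    have : (fun j : Fin (m + 3) => x * (Fin.cons a₂₁ (Fin.cons 0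
        (Fin.cons (algebraMap K (MvPolynomial (Fin N) K) lam * c) v)) :
          Fin (m + 3) → MvPolynomial (Fin N) K) j -
        y * (Fin.cons 0 (Fin.cons a₁₂ (Fin.cons c u)) : Fin (m + 3) → MvPolynomial (Fin N) K) j) =
        Fin.cons (x * a₂₁) (Fin.cons (-(y * a₁₂)) (Fin.cons (s * c)
          (fun j => x * v j - y * u j))) := by
      funext i
      refine Fin.cases ?_ (fun i => Fin.cases ?_ (fun i => Fin.cases ?_ (fun j => ?_) i) i) i
      · simp
      · simp
      · simp only [Fin.cons_succ, Fin.cons_zero, s]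
        ring
      · simp
    refine congrArg Ideal.span ?_
    refine (congrArg Set.range this).trans ?_
    simp only [g, Fin.range_cons]
    ext z
    simp only [Set.mem_insert_iff, Set.mem_union, Set.mem_singleton_iff]
    tauto
  have hsup : ∀ t, Ideal.span (Set.range g) ⊔ Ideal.span {t} =
      Ideal.span (Set.range (Fin.cons t g : Fin (m + 3) → MvPolynomial (Fin N) K)) := by
    intro t
    exact span_cons_sup t g
  rw [projDim_le_iff, hIJ]
  have hcard : Fintype.card (Fin 4 ⊕ (Fin m ⊕ Fin m)) = 2 * m + 4 := by
    simp; omega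
  by_cases hl : LinearIndependent K l
  · have hn : 2 * (m + 3) - 2 = (2 * m + 3) + 1 := by omega
    rw [hn]
    refine pdLE_split _ c s ?_ ?_ ?_
    · exact nzd_of_forms l hl h1 g hg
    · have h := ih N _ g ?_ rfl ?_
      · rw [projDim_le_iff] at h
        exact pdLE_mono (by omega) h
      · intro i
        refine Fin.cases ?_ (fun i => Fin.cases ?_ (fun j => ?_) i) i
        · exact hx.mul ha₂₁
        · exact (hy.mul ha₁₂).neg
        · exact (hx.mul (hv j)).sub (hy.mul (hu j))
      · have inl : ∀ a b : Fin 4, a ≠ b →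
            (some (Sum.inl a) : Option (Fin 4 ⊕ (Fin m ⊕ Fin m))) ≠ some (Sum.inl b) := by
          intro a b hab h
          exact hab (Sum.inl_injective (Option.some_injective _ h))
        refine ht_two l hl h1 (some (Sum.inl 0)) (some (Sum.inl 1)) (some (Sum.inl 3))
          (some (Sum.inl 2)) (inl _ _ (by decide)) (inl _ _ (by decide)) (inl _ _ (by decide))
          (inl _ _ (by decide)) _ ?_ ?_ ?_
        · exact Ideal.subset_span ⟨0, rfl⟩
        · have : -(y * a₁₂) ∈ Ideal.span (Set.range g) := Ideal.subset_span ⟨1, rfl⟩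
          exact neg_mem_iff.1 this
        · change _ ≤ Ideal.span {x, y}
          have hx' : x ∈ Ideal.span {x, y} := Ideal.subset_span (by simp)
          have hy' : y ∈ Ideal.span {x, y} := Ideal.subset_span (by simp)
          rw [Ideal.span_le]
          rintro _ ⟨i, rfl⟩
          refine Fin.cases ?_ (fun i => Fin.cases ?_ (fun j => ?_) i) i
          · exact Ideal.mul_mem_right _ _ hx'
          · exact neg_mem (Ideal.mul_mem_right _ _ hy')
          · exact sub_mem (Ideal.mul_mem_right _ _ hx') (Ideal.mul_mem_right _ _ hy')
    · rw [hsup]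
      refine pdLE_of_forms ls (fun k => h1 (some k)) ?_ _ ?_
      · exact (finrank_range_le_card ls).trans (by omega)
      · intro i
        exact Fin.cases hs hg i
  · rw [hsup]
    have hle : Algebra.adjoin K (Set.range ls) ≤ Algebra.adjoin K (Set.range l) := by
      apply Algebra.adjoin_mono
      rintro _ ⟨k, rfl⟩
      exact ⟨some k, rfl⟩
    refine pdLE_of_forms l h1 ?_ _ ?_
    · have h2 := finrank_range_le_card (R := K) l
      rw [Fintype.card_option, hcard] at h2
      have h3 : ¬ Fintype.card (Option (Fin 4 ⊕ (Fin m ⊕ Fin m))) =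
          (Set.range l).finrank K := fun h => hl (linearIndependent_iff_card_eq_finrank_span.2 h)
      rw [Fintype.card_option, hcard] at h3
      rw [Set.finrank] at h2 h3
      omega
    · intro i
      refine Fin.cases ?_ (fun i => hle (hg i)) i
      exact mul_mem (hle hs) (Algebra.subset_adjoin ⟨none, rfl⟩)
end

section
/- Let R be a polynomial ring over an algebraically closed field K. Let I be an ideal generated by quadrics, contained in the linear prime ideal (x, y) with x, y linearly independent linear forms, and represented by minors by a 1-generic matrix D whose first column is (x, y)^T. Let a be a linear form that is not in the K-linear span of the entries of D. Then (ay) + I = ((y) + I) ∩ ((a) + I₂(D)). -/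
open MvPolynomial Filter

universe u

/-- The linear form with a given coefficient vector. -/
noncomputable def linF (S : Type*) [CommRing S] (N : ℕ) :
    (Fin N → S) →ₗ[S] MvPolynomial (Fin N) S :=
  Fintype.linearCombination S (X : Fin N → MvPolynomial (Fin N) S)

lemma linF_apply {S : Type*} [CommRing S] {N : ℕ} (c : Fin N → S) :
    linF S N c = ∑ i, C (c i) * X i := by
  simp [linF, Fintype.linearCombination_apply, MvPolynomial.smul_eq_C_mul]

lemma linF_injective {S : Type*} [CommRing S] {N : ℕ} :
    Function.Injective (linF S N) := by
  have h := MvPolynomial.linearIndependent_X (R := S) (σ := Fin N)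
  exact linearIndependent_iff_injective_fintypeLinearCombination.1 h

lemma exists_linF {K : Type*} [Field K] {N : ℕ} {p : MvPolynomial (Fin N) K}
    (hp : p.IsHomogeneous 1) : ∃ c, p = linF K N c := by
  have h : p ∈ MvPolynomial.homogeneousSubmodule (Fin N) K 1 := hp
  rw [MvPolynomial.homogeneousSubmodule_one_eq_span_X] at h
  obtain ⟨c, hc⟩ := (Submodule.mem_span_range_iff_exists_fun K).1 h
  exact ⟨c, by rw [← hc]; simp [linF, Fintype.linearCombination_apply]⟩

lemma prime_linF {S : Type*} [CommRing S] [IsDomain S] {N : ℕ} (W : Set (Fin N → S))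
    (hfree : Module.Free S ((Fin N → S) ⧸ Submodule.span S W)) :
    (Ideal.span (linF S N '' W)).IsPrime ∧
      ∀ c, linF S N c ∈ Ideal.span (linF S N '' W) → c ∈ Submodule.span S W := by
  obtain ⟨s, hs⟩ := Module.projective_lifting_property (Submodule.span S W).mkQ
    LinearMap.id (Submodule.mkQ_surjective _)
  have hs' : ∀ q, (Submodule.span S W).mkQ (s q) = q := fun q => LinearMap.congr_fun hs q
  set P : (Fin N → S) →ₗ[S] (Fin N → S) := s ∘ₗ (Submodule.span S W).mkQ with hP
  have hPW : ∀ c, c ∈ Submodule.span S W ↔ P c = 0 := by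
    intro c
    constructor
    · intro h
      have : (Submodule.span S W).mkQ c = 0 := by simpa using h
      simp only [hP, LinearMap.comp_apply, this, map_zero]
    · intro h
      have h2 := hs' ((Submodule.span S W).mkQ c)
      have h3 : s ((Submodule.span S W).mkQ c) = 0 := h
      rw [h3, map_zero] at h2
      simpa using h2.symm
  have hPsub : ∀ c, c - P c ∈ Submodule.span S W := by
    intro c
    rw [← Submodule.Quotient.mk_eq_zero, ← Submodule.mkQ_apply, map_sub, hP,
      LinearMap.comp_apply, hs', sub_self]
  have hlinI : ∀ c ∈ Submodule.span S W, linF S N c ∈ Ideal.span (linF S N '' W) := by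
    intro c hc
    induction hc using Submodule.span_induction with
    | mem x hx => exact Ideal.subset_span ⟨x, hx, rfl⟩
    | zero => simp
    | add x y _ _ h1 h2 => rw [map_add]; exact Ideal.add_mem _ h1 h2
    | smul r x _ h => rw [map_smul, MvPolynomial.smul_eq_C_mul]; exact Ideal.mul_mem_left _ _ h
  let φ : MvPolynomial (Fin N) S →ₐ[S] MvPolynomial (Fin N) S :=
    aeval (fun i => linF S N (P (Pi.single i 1)))
  have hφ : ∀ c, φ (linF S N c) = linF S N (P c) := by
    intro c
    have : (φ.toLinearMap ∘ₗ linF S N) = (linF S N ∘ₗ P) := by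
      apply LinearMap.pi_ext'
      intro i
      ext1
      simp [φ, linF]
    exact LinearMap.congr_fun this c
  have hsub : ∀ p, p - φ p ∈ Ideal.span (linF S N '' W) := by
    have : (Ideal.Quotient.mkₐ S (Ideal.span (linF S N '' W))).comp φ =
        Ideal.Quotient.mkₐ S (Ideal.span (linF S N '' W)) := by
      apply MvPolynomial.algHom_ext
      intro i
      have h1 : (X i : MvPolynomial (Fin N) S) = linF S N (Pi.single i 1) := by
        simp [linF]
      rw [AlgHom.comp_apply, h1, hφ]
      simp only [Ideal.Quotient.mkₐ_eq_mk]
      symm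
      rw [Ideal.Quotient.eq, ← map_sub]
      exact hlinI _ (hPsub _)
    intro p
    have h2 := DFunLike.congr_fun this p
    simp only [AlgHom.comp_apply, Ideal.Quotient.mkₐ_eq_mk] at h2
    exact Ideal.Quotient.eq.1 h2.symm
  have hker : Ideal.span (linF S N '' W) = RingHom.ker φ := by
    apply le_antisymm
    · rw [Ideal.span_le]
      rintro _ ⟨c, hc, rfl⟩
      simp only [SetLike.mem_coe, RingHom.mem_ker]
      rw [hφ, (hPW c).1 (Submodule.subset_span hc), map_zero]
    · intro p hp
      have := hsub p
      rwa [(RingHom.mem_ker).1 hp, sub_zero] at this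
  refine ⟨?_, ?_⟩
  · rw [hker]; exact RingHom.ker_isPrime _
  · intro c hc
    rw [hker, RingHom.mem_ker, hφ] at hc
    rw [hPW]
    exact linF_injective (by rw [hc, map_zero])

lemma koszul_finset {Q : Type*} [CommRing Q] {ι : Type*} [DecidableEq ι] (A : ι → Q)
    (hA : ∀ (s : Finset ι) (k : ι), k ∉ s → ∀ g, A k * g ∈ Ideal.span (A '' s) →
      g ∈ Ideal.span (A '' s)) (s : Finset ι) :
    ∀ g : ι → Q, ∑ j ∈ s, A j * g j = 0 →
      ∃ w : ι → ι → Q, ∀ j ∈ s, g j = ∑ i ∈ s, (w j i - w i j) * A i := by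
  induction s using Finset.induction_on with
  | empty => intro g _; exact ⟨fun _ _ => 0, by simp⟩
  | insert k s hk ih =>
    intro g hg
    rw [Finset.sum_insert hk] at hg
    have h1 : g k ∈ Ideal.span (A '' s) := by
      apply hA s k hk
      rw [eq_neg_of_add_eq_zero_left hg]
      apply neg_mem
      apply Ideal.sum_mem
      intro j hj
      exact Ideal.mul_mem_right _ _ (Ideal.subset_span ⟨j, hj, rfl⟩)
    obtain ⟨c, hc⟩ : ∃ c : ι → Q, ∑ i ∈ s, c i * A i = g k := by
      have := (Submodule.mem_span_image_finset_iff_exists_fun' Q).1 h1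
      simpa using this
    obtain ⟨w, hw⟩ := ih (fun j => g j + c j * A k) (by
      rw [← hg, ← hc, Finset.mul_sum, ← Finset.sum_add_distrib]
      exact Finset.sum_congr rfl (fun i _ => by ring))
    refine ⟨fun j i => if j = k then (if i = k then 0 else c i) else
      (if i = k then 0 else w j i), ?_⟩
    intro j hj
    rw [Finset.sum_insert hk]
    have hne : ∀ i ∈ s, i ≠ k := fun i hi h => hk (h ▸ hi)
    rcases Finset.mem_insert.1 hj with rfl | hj
    · simp only [if_true, sub_self, zero_mul, zero_add]
      rw [← hc]
      apply Finset.sum_congr rfl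
      intro i hi
      simp [hne i hi]
    · have h2 := hw j hj
      rw [eq_sub_of_add_eq h2]
      simp only [hne j hj, if_true, if_false]
      rw [sub_eq_add_neg, add_comm]
      congr 1
      · ring
      · apply Finset.sum_congr rfl
        intro i hi
        simp [hne i hi]

lemma antisymm_sum {Q : Type*} [CommRing Q] {ι : Type*} [Fintype ι] (w : ι → ι → Q) (F : ι → Q) :
    ∑ j, F j * ∑ i, (w j i - w i j) * F i = 0 := by
  have : ∀ j, F j * ∑ i, (w j i - w i j) * F i =
      ∑ i, F j * w j i * F i - ∑ i, F j * w i j * F i := by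
    intro j
    rw [Finset.mul_sum, ← Finset.sum_sub_distrib]
    exact Finset.sum_congr rfl (fun i _ => by ring)
  simp only [this, Finset.sum_sub_distrib]
  rw [sub_eq_zero, Finset.sum_comm]
  exact Finset.sum_congr rfl (fun i _ => Finset.sum_congr rfl (fun j _ => by ring))

lemma contract_aux {Q : Type*} [CommRing Q] {m : ℕ} (A B : Fin m → Q)
    (hK : ∀ g : Fin m → Q, ∑ j, A j * g j = 0 →
      ∃ w : Fin m → Fin m → Q, ∀ j, g j = ∑ i, (w j i - w i j) * A i) (f : Q) (e : ℕ) :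
    ∀ g : Fin m → Polynomial Q, (∀ j, (g j).natDegree ≤ e) →
      Polynomial.C f =
        ∑ j, (Polynomial.C (A j) * Polynomial.X + Polynomial.C (B j)) * g j →
      f ∈ Ideal.span (Set.range fun p : Fin m × Fin m => A p.1 * B p.2 - A p.2 * B p.1) := by
  induction e with
  | zero =>
    intro g hg h
    have hg' : ∀ j, g j = Polynomial.C ((g j).coeff 0) := fun j =>
      Polynomial.eq_C_of_natDegree_le_zero (hg j)
    have h0 : f = ∑ j, B j * (g j).coeff 0 := by
      have := congrArg (fun p => Polynomial.coeff p 0) h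
      simpa [Polynomial.finsetSum_coeff, Polynomial.mul_coeff_zero] using this
    have h1 : ∑ j, A j * (g j).coeff 0 = 0 := by
      have := congrArg (fun p => Polynomial.coeff p 1) h
      simp only [Polynomial.finsetSum_coeff] at this
      rw [Polynomial.coeff_C, if_neg one_ne_zero] at this
      rw [this]
      apply Finset.sum_congr rfl
      intro j _
      rw [hg' j]
      simp [Polynomial.coeff_C]
    obtain ⟨w, hw⟩ := hK _ h1
    have : f = ∑ j, ∑ i, w j i * (A i * B j - A j * B i) := by
      rw [h0]
      simp only [hw]
      have e1 : ∑ j, B j * ∑ i, (w j i - w i j) * A i =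
          ∑ j, ∑ i, w j i * (A i * B j) - ∑ j, ∑ i, w i j * (A i * B j) := by
        rw [← Finset.sum_sub_distrib]
        apply Finset.sum_congr rfl
        intro j _
        rw [Finset.mul_sum, ← Finset.sum_sub_distrib]
        exact Finset.sum_congr rfl (fun i _ => by ring)
      rw [e1, Finset.sum_comm (f := fun j i => w i j * (A i * B j)), ← Finset.sum_sub_distrib]
      apply Finset.sum_congr rfl
      intro j _
      rw [← Finset.sum_sub_distrib]
      exact Finset.sum_congr rfl (fun i _ => by ring)
    rw [this]
    refine Ideal.sum_mem _ fun j _ => Ideal.sum_mem _ fun i _ => Ideal.mul_mem_left _ _ ?_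
    exact Ideal.subset_span ⟨(i, j), rfl⟩
  | succ e ih =>
    intro g hg h
    have h1 : ∑ j, A j * (g j).coeff (e + 1) = 0 := by
      have := congrArg (fun p => Polynomial.coeff p (e + 2)) h
      simp only [Polynomial.finsetSum_coeff] at this
      rw [Polynomial.coeff_C, if_neg (by omega)] at this
      rw [this]
      apply Finset.sum_congr rfl
      intro j _
      have : (g j).coeff (e + 2) = 0 :=
        Polynomial.coeff_eq_zero_of_natDegree_lt (by have := hg j; omega)
      rw [add_mul, Polynomial.coeff_add, mul_assoc, Polynomial.coeff_C_mul,
        Polynomial.coeff_C_mul, this, mul_comm Polynomial.X, Polynomial.coeff_mul_X]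
      simp
    obtain ⟨w, hw⟩ := hK _ h1
    refine ih (fun j => g j - Polynomial.X ^ e * ∑ i, (Polynomial.C (w j i) - Polynomial.C (w i j)) *
      (Polynomial.C (A i) * Polynomial.X + Polynomial.C (B i))) ?_ ?_
    · intro j
      have e2 : (∑ i, (Polynomial.C (w j i) - Polynomial.C (w i j)) *
          (Polynomial.C (A i) * Polynomial.X + Polynomial.C (B i))) =
          Polynomial.C ((g j).coeff (e + 1)) * Polynomial.X +
            Polynomial.C (∑ i, (w j i - w i j) * B i) := by
        rw [hw j, map_sum, map_sum, Finset.sum_mul, ← Finset.sum_add_distrib]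
        apply Finset.sum_congr rfl
        intro i _
        simp only [map_mul, map_sub]
        ring
      rw [e2, Polynomial.natDegree_le_iff_coeff_eq_zero]
      intro k hk
      obtain ⟨k, rfl⟩ : ∃ l, k = e + 1 + l := ⟨k - (e + 1), by omega⟩
      rw [Polynomial.coeff_sub, show e + 1 + k = (1 + k) + e by ring, Polynomial.coeff_X_pow_mul,
        show 1 + k = k + 1 by ring, Polynomial.coeff_add, Polynomial.coeff_C_mul,
        Polynomial.coeff_C, if_neg (by omega), add_zero]
      rcases Nat.eq_zero_or_pos k with rfl | hk'
      · simp [add_comm]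
      · rw [Polynomial.coeff_X_of_ne_one (by omega),
          Polynomial.coeff_eq_zero_of_natDegree_lt (by have := hg j; omega)]
        simp
    · rw [h]
      have := antisymm_sum (fun j i => Polynomial.C (w j i))
        (fun j => Polynomial.C (A j) * Polynomial.X + Polynomial.C (B j))
      simp only [mul_sub, Finset.sum_sub_distrib]
      simp only [mul_left_comm _ (Polynomial.X ^ e)]
      rw [← Finset.mul_sum, this, mul_zero, sub_zero]

lemma torsionfree_aux {K : Type*} [Field K] [IsAlgClosed K] {N : ℕ} {ι : Type*} [Fintype ι]
    (w : ι → Fin N → Polynomial K)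
    (hw : ∀ r : K, LinearIndependent K (fun j i => (w j i).eval r)) (d : ℕ) :
    ∀ p : Polynomial K, p ≠ 0 → p.natDegree ≤ d → ∀ c,
      p • c ∈ Submodule.span (Polynomial K) (Set.range w) →
      c ∈ Submodule.span (Polynomial K) (Set.range w) := by
  have hunit : ∀ p : Polynomial K, IsUnit p → ∀ c,
      p • c ∈ Submodule.span (Polynomial K) (Set.range w) →
      c ∈ Submodule.span (Polynomial K) (Set.range w) := by
    intro p hp c hc
    exact (Submodule.smul_mem_iff_of_isUnit _ hp).1 hc
  induction d with
  | zero =>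
    intro p hp hd c hc
    refine hunit p ?_ c hc
    rw [Polynomial.isUnit_iff_degree_eq_zero]
    rw [Polynomial.degree_eq_natDegree hp]
    simp; omega
  | succ d ih =>
    intro p hp hd c hc
    by_cases h0 : p.degree = 0
    · exact hunit p (Polynomial.isUnit_iff_degree_eq_zero.2 h0) c hc
    obtain ⟨r, hr⟩ := IsAlgClosed.exists_root p h0
    obtain ⟨q, rfl⟩ := Polynomial.dvd_iff_isRoot.2 hr
    have hq : q ≠ 0 := right_ne_zero_of_mul hp
    have hdq : q.natDegree ≤ d := by
      rw [Polynomial.natDegree_mul (Polynomial.X_sub_C_ne_zero r) hq,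
        Polynomial.natDegree_X_sub_C] at hd
      omega
    apply ih q hq hdq
    rw [mul_smul] at hc
    generalize q • c = c' at hc ⊢
    obtain ⟨g, hg⟩ := (Submodule.mem_span_range_iff_exists_fun _).1 hc
    have hz : ∀ j, (g j).eval r = 0 := by
      apply Fintype.linearIndependent_iff.1 (hw r) (fun j => (g j).eval r)
      ext i
      have := congrArg (Polynomial.eval r) (congrFun hg i)
      simpa [Polynomial.eval_finsetSum] using this
    choose h hh using fun j => Polynomial.dvd_iff_isRoot.2 (hz j)
    have : c' = ∑ j, h j • w j := by
      have h1 : (Polynomial.X - Polynomial.C r) • c' =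
          (Polynomial.X - Polynomial.C r) • ∑ j, h j • w j := by
        rw [← hg, Finset.smul_sum]
        apply Finset.sum_congr rfl
        intro j _
        rw [hh j, mul_smul]
      exact smul_right_injective _ (Polynomial.X_sub_C_ne_zero r) h1
    rw [this]
    exact Submodule.sum_mem _ fun j _ => Submodule.smul_mem _ _ (Submodule.subset_span ⟨j, rfl⟩)

lemma free_quot {K : Type*} [Field K] [IsAlgClosed K] {N : ℕ} {ι : Type*} [Fintype ι]
    (w : ι → Fin N → Polynomial K)
    (hw : ∀ r : K, LinearIndependent K (fun j i => (w j i).eval r)) :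
    Module.Free (Polynomial K)
      ((Fin N → Polynomial K) ⧸ Submodule.span (Polynomial K) (Set.range w)) := by
  have : Module.IsTorsionFree (Polynomial K)
      ((Fin N → Polynomial K) ⧸ Submodule.span (Polynomial K) (Set.range w)) := by
    apply Module.IsTorsionFree.of_smul_eq_zero
    intro p m hpm
    by_cases hp : p = 0
    · exact Or.inl hp
    right
    obtain ⟨c, rfl⟩ := Submodule.mkQ_surjective _ m
    rw [← map_smul, Submodule.mkQ_apply, Submodule.Quotient.mk_eq_zero] at hpm
    rw [Submodule.mkQ_apply, Submodule.Quotient.mk_eq_zero]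
    exact torsionfree_aux w hw _ p hp le_rfl c hpm
  infer_instance

lemma nzd_aux {K : Type*} [Field K] [IsAlgClosed K] {N m : ℕ} (A B : Fin m → Fin N → K)
    (α : Fin N → K)
    (hgen : ∀ r : K, LinearIndependent K
      (fun o : Option (Fin m) => o.elim α (fun j => r • A j + B j)))
    (hinf : LinearIndependent K (fun o : Option (Fin m) => o.elim α A))
    (y0 : Fin N → K) (hy : y0 ∉ Submodule.span K {α}) (f : MvPolynomial (Fin N) K)
    (h : linF K N y0 * f ∈ Ideal.span {linF K N α} ⊔
      Ideal.span (Set.range fun p : Fin m × Fin m => linF K N (A p.1) * linF K N (B p.2) -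
        linF K N (A p.2) * linF K N (B p.1))) :
    f ∈ Ideal.span {linF K N α} ⊔
      Ideal.span (Set.range fun p : Fin m × Fin m => linF K N (A p.1) * linF K N (B p.2) -
        linF K N (A p.2) * linF K N (B p.1)) := by
  classical
  set J : Ideal (MvPolynomial (Fin N) K) := Ideal.span {linF K N α} ⊔
      Ideal.span (Set.range fun p : Fin m × Fin m => linF K N (A p.1) * linF K N (B p.2) -
        linF K N (A p.2) * linF K N (B p.1)) with hJ
  -- the prime ideal upstairs
  let w : Option (Fin m) → Fin N → Polynomial K := fun o i =>
    o.elim (Polynomial.C (α i)) (fun j => Polynomial.C (A j i) * Polynomial.X + Polynomial.C (B j i))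
  have hw : ∀ r : K, LinearIndependent K (fun j i => (w j i).eval r) := by
    intro r
    convert hgen r using 1
    funext o i
    cases o with
    | none => simp [w]
    | some j =>
      simp only [w, Option.elim, Polynomial.eval_add, Polynomial.eval_mul, Polynomial.eval_C,
        Polynomial.eval_X, Pi.add_apply, Pi.smul_apply, smul_eq_mul]
      ring
  obtain ⟨hprime, -⟩ := prime_linF (Set.range w) (free_quot w hw)
  set T := Ideal.span (linF (Polynomial K) N '' Set.range w) with hT
  let ι : MvPolynomial (Fin N) K →+* MvPolynomial (Fin N) (Polynomial K) :=
    MvPolynomial.map Polynomial.C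
  have hwn : linF (Polynomial K) N (w none) = ι (linF K N α) := by
    simp [linF_apply, ι, w]
  have hws : ∀ j, linF (Polynomial K) N (w (some j)) =
      ι (linF K N (A j)) * C Polynomial.X + ι (linF K N (B j)) := by
    intro j
    simp only [linF_apply, ι, w, Option.elim, map_sum, map_mul, map_add, MvPolynomial.map_C,
      MvPolynomial.map_X, Finset.sum_mul]
    rw [← Finset.sum_add_distrib]
    exact Finset.sum_congr rfl (fun i _ => by ring)
  have hmemT : ∀ o, linF (Polynomial K) N (w o) ∈ T := fun o =>
    Ideal.subset_span ⟨_, ⟨o, rfl⟩, rfl⟩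
  have hJT : ∀ p ∈ J, ι p ∈ T := by
    have : J ≤ T.comap ι := by
      rw [hJ, sup_le_iff, Ideal.span_le, Ideal.span_le]
      constructor
      · rintro _ rfl
        change ι _ ∈ T
        rw [← hwn]
        exact hmemT _
      · rintro _ ⟨⟨i, j⟩, rfl⟩
        change ι _ ∈ T
        have : ι (linF K N (A i) * linF K N (B j) - linF K N (A j) * linF K N (B i)) =
          ι (linF K N (A i)) * linF (Polynomial K) N (w (some j)) -
          ι (linF K N (A j)) * linF (Polynomial K) N (w (some i)) := by
          rw [hws, hws]
          simp only [map_sub, map_mul]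
          ring
        rw [this]
        exact Ideal.sub_mem _ (Ideal.mul_mem_left _ _ (hmemT _)) (Ideal.mul_mem_left _ _ (hmemT _))
    exact fun p hp => this hp
  -- Koszul syzygies in the quotient
  let I0 : Ideal (MvPolynomial (Fin N) K) := Ideal.span {linF K N α}
  let mk := Ideal.Quotient.mk I0
  have hK : ∀ g : Fin m → MvPolynomial (Fin N) K ⧸ I0, ∑ j, mk (linF K N (A j)) * g j = 0 →
      ∃ w : Fin m → Fin m → MvPolynomial (Fin N) K ⧸ I0,
        ∀ j, g j = ∑ i, (w j i - w i j) * mk (linF K N (A i)) := by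
    intro g hg
    have := koszul_finset (fun j => mk (linF K N (A j))) ?_ Finset.univ g hg
    · simpa using this
    intro s k hk g hg
    obtain ⟨g, rfl⟩ := Ideal.Quotient.mk_surjective g
    have e1 : Ideal.span ((fun j => mk (linF K N (A j))) '' (s : Set (Fin m))) =
        (Ideal.span ((fun j => linF K N (A j)) '' (s : Set (Fin m)))).map mk := by
      rw [Ideal.map_span, Set.image_image]
    have e2 : Ideal.span ((fun j => linF K N (A j)) '' (s : Set (Fin m))) ⊔ I0 =
        Ideal.span (linF K N '' (A '' s ∪ {α})) := by
      rw [Set.image_union, Ideal.span_union, Set.image_image, Set.image_singleton]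
    obtain ⟨hp, hmem⟩ := prime_linF (A '' (s : Set (Fin m)) ∪ {α}) inferInstance
    rw [e1, ← map_mul, Ideal.mem_quotient_iff_mem_sup, e2] at hg
    rw [e1, Ideal.mem_quotient_iff_mem_sup, e2]
    refine (hp.mem_or_mem hg).resolve_left fun hmm => ?_
    have hm2 := hmem _ hmm
    have e3 : A '' (s : Set (Fin m)) ∪ {α} =
        (fun o : Option (Fin m) => o.elim α A) '' (some '' s ∪ {none}) := by
      rw [Set.image_union, Set.image_image, Set.image_singleton]
      rfl
    rw [e3] at hm2
    have := hinf.notMem_span_image (s := some '' (s : Set (Fin m)) ∪ {none}) (x := some k)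
      (by simpa using hk)
    exact this hm2
  -- contraction
  let ψ : MvPolynomial (Fin N) (Polynomial K) →+* Polynomial (MvPolynomial (Fin N) K ⧸ I0) :=
    MvPolynomial.eval₂Hom (Polynomial.mapRingHom (algebraMap K (MvPolynomial (Fin N) K ⧸ I0)))
      (fun i => Polynomial.C (mk (X i)))
  have hψι : ∀ p, ψ (ι p) = Polynomial.C (mk p) := by
    have : ψ.comp ι = Polynomial.C.comp mk := by
      apply MvPolynomial.ringHom_ext
      · intro r
        simp [ψ, ι]
        rfl
      · intro i
        simp [ψ, ι]
    exact fun p => RingHom.congr_fun this p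
  have hψX : ψ (C Polynomial.X) = Polynomial.X := by simp [ψ]
  have hcon : ∀ p, ι p ∈ T → p ∈ J := by
    intro p hp
    have hp' : ι p ∈ Ideal.span (Set.range fun o => linF (Polynomial K) N (w o)) := by
      rw [hT, ← Set.range_comp] at hp
      exact hp
    obtain ⟨c, hc⟩ := (Ideal.mem_span_range_iff_exists_fun).1 hp'
    have hc2 := congrArg ψ hc
    rw [hψι, Fintype.sum_option, map_add, map_sum, map_mul, hwn, hψι] at hc2
    have hz : mk (linF K N α) = 0 :=
      Ideal.Quotient.eq_zero_iff_mem.2 (Ideal.subset_span rfl)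
    simp only [hws, map_mul, map_add, hψι, hψX] at hc2
    rw [hz, map_zero, mul_zero, zero_add] at hc2
    have := contract_aux (fun j => mk (linF K N (A j))) (fun j => mk (linF K N (B j))) hK (mk p)
      (Finset.univ.sup fun j => (ψ (c (some j))).natDegree) (fun j => ψ (c (some j)))
      (fun j => Finset.le_sup (f := fun j => (ψ (c (some j))).natDegree) (Finset.mem_univ j))
      (by rw [← hc2]; exact Finset.sum_congr rfl (fun i _ => by ring))
    have e1 : Ideal.span (Set.range fun p : Fin m × Fin m =>
        mk (linF K N (A p.1)) * mk (linF K N (B p.2)) -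
        mk (linF K N (A p.2)) * mk (linF K N (B p.1))) =
        (Ideal.span (Set.range fun p : Fin m × Fin m => linF K N (A p.1) * linF K N (B p.2) -
        linF K N (A p.2) * linF K N (B p.1))).map mk := by
      rw [Ideal.map_span, ← Set.range_comp]
      congr 2
    rw [e1, Ideal.mem_quotient_iff_mem_sup, sup_comm] at this
    exact this
  -- `y` is not in the ideal
  have hyJ : linF K N y0 ∉ J := by
    intro hyJ
    obtain ⟨F, hF1, hF2⟩ := Submodule.exists_le_ker_of_notMem hy
    let θ : MvPolynomial (Fin N) K →ₐ[K] DualNumber K :=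
      aeval (fun i => F (Pi.single i 1) • DualNumber.eps)
    have hθ : ∀ c, θ (linF K N c) = F c • DualNumber.eps := by
      intro c
      have : θ.toLinearMap ∘ₗ linF K N = F.smulRight DualNumber.eps := by
        apply LinearMap.pi_ext'
        intro i
        ext1
        simp [θ, linF]
      exact LinearMap.congr_fun this c
    have hle : J ≤ RingHom.ker θ := by
      rw [hJ, sup_le_iff, Ideal.span_le, Ideal.span_le]
      constructor
      · rintro _ rfl
        change θ _ = 0
        rw [hθ, LinearMap.mem_ker.1 (hF2 (Submodule.mem_span_singleton_self α)), zero_smul]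
      · rintro _ ⟨⟨i, j⟩, rfl⟩
        change θ _ = 0
        simp [hθ]
    have h1 : θ (linF K N y0) = 0 := hle hyJ
    rw [hθ] at h1
    have h2 := congrArg TrivSqZeroExt.snd h1
    simp [hF1] at h2
  have h1 := hJT _ h
  rw [map_mul] at h1
  exact hcon _ ((hprime.mem_or_mem h1).resolve_left fun h2 => hyJ (hcon _ h2))

/-- if `I` is generated by quadrics, contained in the linear prime `(x, y)`,
and represented by minors by a 1-generic matrix `D` with first column `(x, y)ᵀ`, and `a`
is a linear form not in the span of the entries of `D`, then
`(ay) + I = ((y) + I) ∩ ((a) + I₂(D))`. -/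
theorem stmt13 (K : Type u) [Field K] [IsAlgClosed K] (N n : ℕ)
    (x y : MvPolynomial (Fin N) K) (hx : x.IsHomogeneous 1) (hy : y.IsHomogeneous 1)
    (hxy : LinearIndependent K ![x, y])
    (hprime : (Ideal.span {x, y}).IsPrime)
    (u v : Fin n → MvPolynomial (Fin N) K)
    (hu : ∀ j, (u j).IsHomogeneous 1) (hv : ∀ j, (v j).IsHomogeneous 1)
    (I : Ideal (MvPolynomial (Fin N) K))
    (hI : I = repByMinors x y u v)
    (hle : I ≤ Ideal.span {x, y})
    (h1g : OneGeneric K (Matrix.of ![Fin.cons x u, Fin.cons y v] : Matrix (Fin 2) (Fin (n + 1)) (MvPolynomial (Fin N) K)))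
    (a : MvPolynomial (Fin N) K) (ha : a.IsHomogeneous 1)
    (hspan : a ∉ Submodule.span K (({x, y} ∪ Set.range u ∪ Set.range v : Set (MvPolynomial (Fin N) K)))) :
    Ideal.span {a * y} ⊔ I =
      (Ideal.span {y} ⊔ I) ⊓
        (Ideal.span {a} ⊔ minors2 (Matrix.of ![Fin.cons x u, Fin.cons y v] : Matrix (Fin 2) (Fin (n + 1)) (MvPolynomial (Fin N) K))) := by
  subst hI
  obtain ⟨xc, hxc⟩ := exists_linF hx
  obtain ⟨yc, hyc⟩ := exists_linF hy
  obtain ⟨α, hα⟩ := exists_linF ha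
  choose uc huc using fun j => exists_linF (hu j)
  choose vc hvc using fun j => exists_linF (hv j)
  let A : Fin (n + 1) → Fin N → K := Fin.cons xc uc
  let B : Fin (n + 1) → Fin N → K := Fin.cons yc vc
  set M : Matrix (Fin 2) (Fin (n + 1)) (MvPolynomial (Fin N) K) :=
    Matrix.of ![Fin.cons x u, Fin.cons y v] with hM
  have hM0 : ∀ j, M 0 j = linF K N (A j) := by
    intro j
    refine Fin.cases ?_ (fun j => ?_) j
    · simp [hM, A, hxc]
    · simp [hM, A, huc]
  have hM1 : ∀ j, M 1 j = linF K N (B j) := by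
    intro j
    refine Fin.cases ?_ (fun j => ?_) j
    · simp [hM, B, hyc]
    · simp [hM, B, hvc]
  set E := Submodule.span K (({x, y} ∪ Set.range u ∪ Set.range v : Set (MvPolynomial (Fin N) K)))
    with hE
  have hEA : ∀ j, linF K N (A j) ∈ E := by
    intro j
    refine Submodule.subset_span ?_
    refine Fin.cases ?_ (fun j => ?_) j
    · simp [A, ← hxc]
    · simp [A, ← huc]
  have hEB : ∀ j, linF K N (B j) ∈ E := by
    intro j
    refine Submodule.subset_span ?_
    refine Fin.cases ?_ (fun j => ?_) j
    · simp [B, ← hyc]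
    · simp [B, ← hvc]
  have hind : ∀ r s : K, (r ≠ 0 ∨ s ≠ 0) → LinearIndependent K
      (fun o : Option (Fin (n + 1)) => o.elim α (fun j => r • A j + s • B j)) := by
    intro r s hrs
    rw [linearIndependent_option]
    constructor
    · rw [Fintype.linearIndependent_iff]
      intro g hg
      by_contra hne
      push Not at hne
      obtain ⟨j0, hj0⟩ := hne
      refine h1g ![r, s] g ?_ ?_ ?_
      · intro h0
        have h1 := congrFun h0 0
        have h2 := congrFun h0 1
        simp at h1 h2
        tauto
      · intro h0
        exact hj0 (congrFun h0 j0)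
      · have h3 := congrArg (linF K N) hg
        simp only [Function.comp_apply, Option.elim, map_sum, map_smul, map_add, map_zero] at h3
        rw [Fin.sum_univ_two, ← h3, ← Finset.sum_add_distrib]
        apply Finset.sum_congr rfl
        intro j _
        rw [hM0, hM1]
        simp only [Matrix.cons_val_zero, Matrix.cons_val_one, MvPolynomial.algebraMap_eq,
          MvPolynomial.smul_eq_C_mul, map_mul]
        ring
    · intro hmem
      apply hspan
      have : Submodule.span K (Set.range ((fun o : Option (Fin (n + 1)) =>
          o.elim α (fun j => r • A j + s • B j)) ∘ some)) ≤ E.comap (linF K N) := by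
        rw [Submodule.span_le]
        rintro _ ⟨j, rfl⟩
        simp only [Function.comp_apply, Option.elim, SetLike.mem_coe, Submodule.mem_comap,
          map_add, map_smul]
        exact E.add_mem (E.smul_mem _ (hEA j)) (E.smul_mem _ (hEB j))
      rw [hα]
      exact this hmem
  have hy0 : yc ∉ Submodule.span K {α} := by
    intro h
    obtain ⟨t, ht⟩ := Submodule.mem_span_singleton.1 h
    have hyE : y ∈ E := Submodule.subset_span (by simp)
    have hyt : y = t • a := by rw [hyc, hα, ← ht, map_smul]
    have hyne : y ≠ 0 := hxy.ne_zero 1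
    have ht0 : t ≠ 0 := by
      rintro rfl
      exact hyne (by rw [hyt, zero_smul])
    rw [hyt] at hyE
    exact hspan ((E.smul_mem_iff ht0).1 hyE)
  have hmin : minors2 M = Ideal.span (Set.range fun p : Fin (n + 1) × Fin (n + 1) =>
      linF K N (A p.1) * linF K N (B p.2) - linF K N (A p.2) * linF K N (B p.1)) := by
    simp only [minors2, hM0, hM1]
  have key : ∀ f, y * f ∈ Ideal.span {a} ⊔ minors2 M → f ∈ Ideal.span {a} ⊔ minors2 M := by
    intro f hf
    rw [hmin, hα] at hf ⊢
    rw [hyc] at hf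
    refine nzd_aux A B α (fun r => ?_) ?_ yc hy0 f hf
    · simpa using hind r 1 (Or.inr one_ne_zero)
    · simpa using hind 1 0 (Or.inl one_ne_zero)
  have hIm : repByMinors x y u v ≤ minors2 M := by
    rw [repByMinors, Ideal.span_le]
    rintro _ ⟨j, rfl⟩
    refine Ideal.subset_span ⟨(0, j.succ), ?_⟩
    simp [hM, mul_comm]
  -- all `y * v_j u_i` relations
  have hgen : ∀ j, y * M 0 j - x * M 1 j ∈ repByMinors x y u v := by
    intro j
    refine Fin.cases ?_ (fun j => ?_) j
    · have : y * M 0 0 - x * M 1 0 = 0 := by simp [hM, mul_comm]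
      rw [this]; exact Ideal.zero_mem _
    · have : y * M 0 j.succ - x * M 1 j.succ = -(x * v j - y * u j) := by simp [hM]
      rw [this]
      exact neg_mem (Ideal.subset_span ⟨j, rfl⟩)
  have hyI : ∀ q ∈ minors2 M, y * q ∈ repByMinors x y u v := by
    intro q hq
    have : minors2 M ≤ (repByMinors x y u v).colon {y} := by
      rw [minors2, Ideal.span_le]
      rintro _ ⟨⟨i, j⟩, rfl⟩
      rw [SetLike.mem_coe, Submodule.mem_colon_singleton, smul_eq_mul]
      have : (M 0 i * M 1 j - M 0 j * M 1 i) * y =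
          M 1 j * (y * M 0 i - x * M 1 i) - M 1 i * (y * M 0 j - x * M 1 j) := by ring
      rw [this]
      exact Ideal.sub_mem _ (Ideal.mul_mem_left _ _ (hgen i)) (Ideal.mul_mem_left _ _ (hgen j))
    have h2 := this hq
    rw [Submodule.mem_colon_singleton, smul_eq_mul, mul_comm] at h2
    exact h2
  apply le_antisymm
  · refine le_inf (sup_le_sup_right ?_ _) (sup_le_sup ?_ hIm)
    · rw [Ideal.span_singleton_le_span_singleton]; exact Dvd.intro_left a rfl
    · rw [Ideal.span_singleton_le_span_singleton]; exact Dvd.intro y rfl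
  · rintro f ⟨hf1, hf2⟩
    obtain ⟨p, hp, q, hq, rfl⟩ := Submodule.mem_sup.1 hf1
    obtain ⟨g, rfl⟩ := Ideal.mem_span_singleton'.1 hp
    refine Ideal.add_mem _ ?_ (Ideal.mem_sup_right hq)
    have h1 : g * y ∈ Ideal.span {a} ⊔ minors2 M :=
      (Ideal.add_mem_iff_left _ (Ideal.mem_sup_right (hIm hq))).1 hf2
    rw [mul_comm] at h1
    obtain ⟨p', hp', q', hq', rfl⟩ := Submodule.mem_sup.1 (key g h1)
    obtain ⟨g', rfl⟩ := Ideal.mem_span_singleton'.1 hp'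
    rw [show (g' * a + q') * y = g' * (a * y) + y * q' by ring]
    exact Ideal.add_mem _ (Ideal.mem_sup_left (Ideal.mul_mem_left _ _ (Ideal.subset_span rfl)))
      (Ideal.mem_sup_right (hyI q' hq'))
end
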